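/- Assume the Riemann Hypothesis. There is an absolute constant C such that for all x ≥ 1 and all real t one has | 2 x^{1/2 − it} ∑_γ x^{iγ}/(1 + (t − γ)²) + ∑_{n=1}^∞ Λ(n) a_n(x) n^{−it} − 2 x^{1−it}/((1/2 + it)(3/2 − it)) − x^{−1/2} log(|t| + 2) | ≤ C ( x^{−1/2} + x^{−2}/(|t| + 2) ), where the first sum runs over all ordinates γ of the non-trivial zeros of ζ counted with multiplicity. -/

import Mathlib

open Complex Filter MeasureTheory Real Set

noncomputable section

/-- A non-trivial zero of the Riemann zeta function. -/
def ZetaNontrivZero (ρ : ℂ) : Prop := riemannZeta ρ = 0 ∧ 0 < ρ.re ∧ ρ.re < 1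

/-- The multiplicity of `ρ` as a zero of `ζ`. -/
def zetaMult (ρ : ℂ) : ℕ := sInf {n : ℕ | iteratedDeriv n riemannZeta ρ ≠ 0}

/-- The weight `a_n(x) = min((n/x)^{1/2}, (x/n)^{3/2})`. -/
def aWeight (n : ℕ) (x : ℝ) : ℝ := min (((n : ℝ) / x) ^ ((1 : ℝ) / 2)) ((x / n) ^ ((3 : ℝ) / 2))

lemma mef_order_ne_top {f : ℂ → ℂ} (hf : Differentiable ℂ f) {z₀ : ℂ} (h0 : f z₀ ≠ 0) (ρ : ℂ) :
    analyticOrderAt f ρ ≠ ⊤ := by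
  intro h
  rw [analyticOrderAt_eq_top] at h
  have hA : AnalyticOnNhd ℂ f univ := fun z _ => hf.analyticAt z
  have := hA.eqOn_zero_of_preconnected_of_eventuallyEq_zero isPreconnected_univ (mem_univ ρ) h
  exact h0 (this (mem_univ z₀))

lemma mef_div_one {f : ℂ → ℂ} (hf : Differentiable ℂ f) {z₀ : ℂ} (h0 : f z₀ ≠ 0) (ρ : ℂ) :
    ∃ g : ℂ → ℂ, Differentiable ℂ g ∧ (∀ z, f z = (z - ρ) ^ (analyticOrderNatAt f ρ) * g z) ∧
      g ρ ≠ 0 := by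
  have hfin := mef_order_ne_top hf h0 ρ
  obtain ⟨k, hk, hkρ, hev⟩ := (hf.analyticAt ρ).analyticOrderAt_ne_top.1 hfin
  set n := analyticOrderNatAt f ρ
  classical
  let g : ℂ → ℂ := Function.update (fun z => f z / (z - ρ) ^ n) ρ (k ρ)
  have hgρ : g ρ = k ρ := by simp [g]
  have hgz : ∀ z, z ≠ ρ → g z = f z / (z - ρ) ^ n := fun z hz => by simp [g, hz]
  have hgk : g =ᶠ[nhds ρ] k := by
    filter_upwards [hev] with z hz
    by_cases h : z = ρ
    · rw [h, hgρ]
    · rw [hgz z h, hz, smul_eq_mul]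
      have : (z - ρ) ^ n ≠ 0 := pow_ne_zero _ (sub_ne_zero.2 h)
      field_simp
  refine ⟨g, ?_, ?_, by rw [hgρ]; exact hkρ⟩
  · intro z
    by_cases h : z = ρ
    · subst h
      exact hk.differentiableAt.congr_of_eventuallyEq hgk
    · have : g =ᶠ[nhds z] fun z => f z / (z - ρ) ^ n := by
        filter_upwards [isOpen_ne.mem_nhds h] with w hw
        exact hgz w hw
      refine DifferentiableAt.congr_of_eventuallyEq ?_ this
      exact (hf z).div (by fun_prop) (pow_ne_zero _ (sub_ne_zero.2 h))
  · intro z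
    by_cases h : z = ρ
    · subst h
      rw [hgρ]
      have := hev.self_of_nhds
      simpa using this
    · rw [hgz z h]
      have : (z - ρ) ^ n ≠ 0 := pow_ne_zero _ (sub_ne_zero.2 h)
      field_simp

lemma mef_div_finset {f : ℂ → ℂ} (hf : Differentiable ℂ f) {z₀ : ℂ} (h0 : f z₀ ≠ 0)
    (S : Finset ℂ) :
    ∃ g : ℂ → ℂ, Differentiable ℂ g ∧
      (∀ z, f z = (∏ ρ ∈ S, (z - ρ) ^ (analyticOrderNatAt f ρ)) * g z) ∧
      ∀ ρ ∈ S, g ρ ≠ 0 := by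
  classical
  induction S using Finset.induction_on with
  | empty => exact ⟨f, hf, by simp, by simp⟩
  | insert a S ha ih =>
    obtain ⟨g, hg, hfg, hne⟩ := ih
    have hg0 : g z₀ ≠ 0 := by
      intro h
      apply h0
      rw [hfg, h, mul_zero]
    obtain ⟨k, hk, hgk, hka⟩ := mef_div_one hg hg0 a
    have hord : analyticOrderNatAt f a = analyticOrderNatAt g a := by
      have hP : AnalyticAt ℂ (fun z => ∏ ρ ∈ S, (z - ρ) ^ (analyticOrderNatAt f ρ)) a := by
        apply Differentiable.analyticAt
        fun_prop
      have hP0 : (fun z => ∏ ρ ∈ S, (z - ρ) ^ (analyticOrderNatAt f ρ)) a ≠ 0 := by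
        simp only
        refine Finset.prod_ne_zero_iff.2 fun ρ hρ => pow_ne_zero _ (sub_ne_zero.2 ?_)
        rintro rfl
        exact ha hρ
      have hfe : f = (fun z => ∏ ρ ∈ S, (z - ρ) ^ (analyticOrderNatAt f ρ)) * g := by
        funext z
        exact hfg z
      have hz := hP.analyticOrderAt_eq_zero.2 hP0
      unfold analyticOrderNatAt
      conv_lhs => rw [hfe]
      rw [analyticOrderAt_mul hP (hg.analyticAt a), hz, zero_add]
    refine ⟨k, hk, ?_, ?_⟩
    · intro z
      rw [Finset.prod_insert ha, hord, hfg z]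
      conv_lhs => rw [hgk z]
      ring
    · intro ρ hρ
      rcases Finset.mem_insert.1 hρ with rfl | h
      · exact hka
      · intro hk0
        apply hne ρ h
        rw [hgk, hk0, mul_zero]

/-- nonvanishing `g` on a ball with `‖g‖ ≤ ‖g z₀‖ e^M`. -/
lemma mef_logDeriv_diff {g : ℂ → ℂ} (hg : Differentiable ℂ g) {z₀ : ℂ} {R M : ℝ} (hR : 0 < R)
    (hM : 0 < M) (hne : ∀ z ∈ Metric.ball z₀ R, g z ≠ 0)
    (hb : ∀ z ∈ Metric.ball z₀ R, ‖g z‖ ≤ ‖g z₀‖ * Real.exp M)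
    {z : ℂ} (hz : dist z z₀ ≤ R / 4) :
    ‖logDeriv g z - logDeriv g z₀‖ ≤ 128 * M / R ^ 2 * dist z z₀ := by
  have hgd : DifferentiableOn ℂ (fun z => deriv g z / g z) (Metric.ball z₀ R) := by
    intro w hw
    have : DifferentiableAt ℂ (deriv g) w := (hg.analyticAt w).deriv.differentiableAt
    exact (this.div (hg w) (hne w hw)).differentiableWithinAt
  obtain ⟨h, h0, hh⟩ := hgd.isExactOn_ball.with_val_at z₀ 0
  have hz0 : z₀ ∈ Metric.ball z₀ R := Metric.mem_ball_self hR
  have hexp : ∀ w ∈ Metric.ball z₀ R, g w = g z₀ * Complex.exp (h w) := by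
    intro w hw
    have hconst : ∀ w ∈ Metric.ball z₀ R,
        HasDerivWithinAt (fun w => g w * Complex.exp (-h w)) 0 (Metric.ball z₀ R) w := by
      intro w hw
      have := ((hg w).hasDerivAt.mul ((hh w hw).neg.cexp)).hasDerivWithinAt (s := Metric.ball z₀ R)
      have hw0 := hne w hw
      have e : deriv g w * Complex.exp (-h w) +
          g w * (Complex.exp (-h w) * -(deriv g w / g w)) = 0 := by
        field_simp; ring
      rw [← e]
      exact this
    have := (convex_ball z₀ R).is_const_of_fderivWithin_eq_zero (𝕜 := ℂ)
      (f := fun w => g w * Complex.exp (-h w))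
      (fun w hw => (hconst w hw).differentiableWithinAt) (fun w hw => by
        have hu : UniqueDiffWithinAt ℂ (Metric.ball z₀ R) w :=
          Metric.isOpen_ball.uniqueDiffWithinAt hw
        rw [(hconst w hw).hasFDerivWithinAt.fderivWithin hu]
        ext; simp) hw hz0
    simp only [h0, neg_zero, Complex.exp_zero, mul_one] at this
    rw [← this, mul_assoc, ← Complex.exp_add]
    simp
  have hre : ∀ w ∈ Metric.ball z₀ R, (h w).re ≤ M := by
    intro w hw
    have h1 := hb w hw
    rw [hexp w hw, norm_mul, Complex.norm_exp] at h1
    have h2 : 0 < ‖g z₀‖ := norm_pos_iff.2 (hne _ hz0)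
    exact Real.exp_le_exp.1 (le_of_mul_le_mul_left h1 h2)
  have hhd : DifferentiableOn ℂ h (Metric.ball z₀ R) :=
    fun w hw => (hh w hw).differentiableAt.differentiableWithinAt
  have hbd : ∀ w, dist w z₀ ≤ R / 2 → ‖h w‖ ≤ 2 * M := by
    intro w hw
    have hw' : w - z₀ ∈ Metric.ball (0 : ℂ) R := by
      rw [mem_ball_zero_iff, ← dist_eq_norm]; linarith
    have := Complex.borelCaratheodory_zero (f := fun v => h (v + z₀)) hM (R := R)
      (z := w - z₀) (by
        intro v hv
        have hv' : v + z₀ ∈ Metric.ball z₀ R := by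
          simpa [Metric.mem_ball, dist_eq_norm] using hv
        have := (hh _ hv').differentiableAt
        exact (this.comp v (by fun_prop : DifferentiableAt ℂ (fun v => v + z₀) v)).differentiableWithinAt)
      (by
        intro v hv
        apply hre
        simpa [Metric.mem_ball, dist_eq_norm] using hv) hR hw' (by simp [h0])
    simp only [sub_add_cancel] at this
    refine this.trans ?_
    rw [← dist_eq_norm, div_le_iff₀ (by linarith)]
    nlinarith
  have hderiv : ∀ w ∈ Metric.ball z₀ R, deriv h w = logDeriv g w := by
    intro w hw
    rw [(hh w hw).deriv, logDeriv_apply]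
  have hb1 : ∀ w, dist w z₀ ≤ 3 * R / 8 → ‖deriv h w‖ ≤ 16 * M / R := by
    intro w hw
    have hsub : Metric.closedBall w (R / 8) ⊆ Metric.ball z₀ R := by
      intro v hv
      rw [Metric.mem_closedBall] at hv
      rw [Metric.mem_ball]
      linarith [dist_triangle v w z₀]
    have := Complex.norm_deriv_le_of_forall_mem_sphere_norm_le (f := h) (c := w) (R := R / 8)
      (C := 2 * M) (by positivity)
      ((hhd.mono (by rw [closure_ball w (by positivity)]; exact hsub)).diffContOnCl)
      (fun v hv => hbd v (by
        rw [Metric.mem_sphere] at hv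
        linarith [dist_triangle v w z₀]))
    refine this.trans (le_of_eq ?_)
    field_simp; ring
  have hdd : DifferentiableOn ℂ (deriv h) (Metric.ball z₀ R) := hhd.deriv Metric.isOpen_ball
  have hb2 : ∀ w, dist w z₀ ≤ R / 4 → ‖deriv (deriv h) w‖ ≤ 128 * M / R ^ 2 := by
    intro w hw
    have hsub : Metric.closedBall w (R / 8) ⊆ Metric.ball z₀ R := by
      intro v hv
      rw [Metric.mem_closedBall] at hv
      rw [Metric.mem_ball]
      linarith [dist_triangle v w z₀]
    have := Complex.norm_deriv_le_of_forall_mem_sphere_norm_le (f := deriv h) (c := w) (R := R / 8)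
      (C := 16 * M / R) (by positivity)
      ((hdd.mono (by rw [closure_ball w (by positivity)]; exact hsub)).diffContOnCl)
      (fun v hv => hb1 v (by
        rw [Metric.mem_sphere] at hv
        linarith [dist_triangle v w z₀]))
    refine this.trans (le_of_eq ?_)
    field_simp; ring
  have hzR : z ∈ Metric.ball z₀ R := by rw [Metric.mem_ball]; linarith
  rw [← hderiv z hzR, ← hderiv z₀ hz0, dist_eq_norm]
  refine (convex_closedBall z₀ (R / 4)).norm_image_sub_le_of_norm_deriv_le (𝕜 := ℂ)
    (f := deriv h) ?_ ?_ (Metric.mem_closedBall_self (by positivity)) (Metric.mem_closedBall.2 hz)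
  · intro w hw
    rw [Metric.mem_closedBall] at hw
    exact (hdd w (by rw [Metric.mem_ball]; linarith)).differentiableAt
      (Metric.isOpen_ball.mem_nhds (by rw [Metric.mem_ball]; linarith))
  · intro w hw
    exact hb2 w (Metric.mem_closedBall.1 hw)

lemma mef_hadamard_bound {f : ℂ → ℂ} (hf : Differentiable ℂ f) {z₀ : ℂ} (h0 : f z₀ ≠ 0) {R M : ℝ}
    (hR : 0 < R) (hM : 0 < M)
    (hb : ∀ z ∈ Metric.sphere z₀ (4 * R), ‖f z‖ ≤ ‖f z₀‖ * Real.exp M)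
    (S : Finset ℂ) (hS : ∀ ρ, ρ ∈ S ↔ f ρ = 0 ∧ dist ρ z₀ ≤ R)
    {z : ℂ} (hz : dist z z₀ ≤ R / 4) (hfz : f z ≠ 0) :
    ‖logDeriv f z - logDeriv f z₀ -
      ∑ ρ ∈ S, (analyticOrderNatAt f ρ : ℂ) * (1 / (z - ρ) - 1 / (z₀ - ρ))‖
      ≤ 128 * M / R ^ 2 * dist z z₀ := by
  obtain ⟨g, hg, hfg, hgS⟩ := mef_div_finset hf h0 S
  have hld : ∀ w, f w ≠ 0 → logDeriv f w =
      ∑ ρ ∈ S, (analyticOrderNatAt f ρ : ℂ) * (1 / (w - ρ)) + logDeriv g w := by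
    intro w hw
    have hgw : g w ≠ 0 := fun h => hw (by rw [hfg, h, mul_zero])
    have hwS : ∀ ρ ∈ S, w - ρ ≠ 0 := fun ρ hρ => sub_ne_zero.2 (by
      rintro rfl
      exact hw ((hS _).1 hρ).1)
    have hP : (∏ ρ ∈ S, (w - ρ) ^ (analyticOrderNatAt f ρ)) ≠ 0 :=
      Finset.prod_ne_zero_iff.2 fun ρ hρ => pow_ne_zero _ (hwS ρ hρ)
    have hfe : f = fun z => (∏ ρ ∈ S, (z - ρ) ^ (analyticOrderNatAt f ρ)) * g z := by
      funext z; exact hfg z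
    conv_lhs => rw [hfe]
    rw [logDeriv_mul w hP hgw (by fun_prop) (hg w)]
    congr 1
    rw [logDeriv_prod (f := fun ρ z => (z - ρ) ^ (analyticOrderNatAt f ρ)) (fun ρ hρ => pow_ne_zero _ (hwS ρ hρ)) (fun ρ _ => by fun_prop)]
    refine Finset.sum_congr rfl fun ρ hρ => ?_
    rw [logDeriv_fun_pow (by fun_prop)]
    congr 1
    simp [logDeriv_apply]
  have hne : ∀ w ∈ Metric.ball z₀ R, g w ≠ 0 := by
    intro w hw h
    exact hgS w ((hS w).2 ⟨by rw [hfg, h, mul_zero], (Metric.mem_ball.1 hw).le⟩) h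
  have hbs : ∀ w ∈ Metric.sphere z₀ (4 * R), ‖g w‖ ≤ ‖g z₀‖ * Real.exp M := by
    intro w hw
    have h1 := hb w hw
    rw [hfg w, hfg z₀, norm_mul, norm_mul, norm_prod, norm_prod] at h1
    set P := ∏ ρ ∈ S, ‖(z₀ - ρ) ^ analyticOrderNatAt f ρ‖
    have hPpos : 0 < P := by
      refine Finset.prod_pos fun ρ hρ => norm_pos_iff.2 (pow_ne_zero _ (sub_ne_zero.2 ?_))
      rintro rfl
      exact h0 ((hS _).1 hρ).1
    have hPle : P ≤ ∏ ρ ∈ S, ‖(w - ρ) ^ analyticOrderNatAt f ρ‖ := by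
      refine Finset.prod_le_prod (fun _ _ => norm_nonneg _) fun ρ hρ => ?_
      rw [norm_pow, norm_pow]
      refine pow_le_pow_left₀ (norm_nonneg _) ?_ _
      have h2 := ((hS ρ).1 hρ).2
      rw [Metric.mem_sphere] at hw
      rw [← dist_eq_norm, ← dist_eq_norm]
      rw [dist_comm z₀ ρ]
      linarith [dist_triangle w ρ z₀]
    have h3 : P * ‖g w‖ ≤ P * (‖g z₀‖ * Real.exp M) := by
      calc P * ‖g w‖ ≤ _ := mul_le_mul_of_nonneg_right hPle (norm_nonneg _)
        _ ≤ _ := h1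
        _ = _ := by ring
    exact le_of_mul_le_mul_left h3 hPpos
  have hball : ∀ w ∈ Metric.ball z₀ R, ‖g w‖ ≤ ‖g z₀‖ * Real.exp M := by
    intro w hw
    refine Complex.norm_le_of_forall_mem_frontier_norm_le (U := Metric.ball z₀ (4 * R))
      Metric.isBounded_ball hg.diffContOnCl ?_ ?_
    · rw [frontier_ball _ (by positivity)]
      exact hbs
    · exact subset_closure (Metric.ball_subset_ball (by linarith) hw)
  have key := mef_logDeriv_diff hg hR hM hne hball hz
  rw [hld z hfz, hld z₀ h0]
  convert key using 2
  simp only [mul_sub, Finset.sum_sub_distrib]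
  ring

lemma mef_hadamard_tendsto {f : ℂ → ℂ} (hf : Differentiable ℂ f) {z₀ : ℂ} (h0 : f z₀ ≠ 0)
    {A : ℝ} (hb : ∀ z, ‖f z‖ ≤ Real.exp (A * (1 + ‖z‖) ^ (3 / 2 : ℝ)))
    (S : ℕ → Finset ℂ) (hS : ∀ n ρ, ρ ∈ S n ↔ f ρ = 0 ∧ dist ρ z₀ ≤ n)
    {z : ℂ} (hfz : f z ≠ 0) :
    Tendsto (fun n => ∑ ρ ∈ S n, (analyticOrderNatAt f ρ : ℂ) * (1 / (z - ρ) - 1 / (z₀ - ρ)))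
      atTop (nhds (logDeriv f z - logDeriv f z₀)) := by
  set B : ℝ := |A| + |Real.log ‖f z₀‖| + 1
  set D : ℝ := 1 + ‖z₀‖ + 4
  have hfz0 : 0 < ‖f z₀‖ := norm_pos_iff.2 h0
  have hD : 0 < D := by positivity
  have hB : 0 < B := by positivity
  set M : ℕ → ℝ := fun n => B * (D * n) ^ (3 / 2 : ℝ)
  rw [tendsto_iff_norm_sub_tendsto_zero]
  have hlim : Tendsto (fun n : ℕ => 128 * B * D ^ (3 / 2 : ℝ) * dist z z₀ * (n : ℝ) ^ (-(1/2 : ℝ)))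
      atTop (nhds 0) := by
    have := (tendsto_rpow_neg_atTop (y := 1/2) (by norm_num)).comp tendsto_natCast_atTop_atTop
    simpa using this.const_mul (128 * B * D ^ (3 / 2 : ℝ) * dist z z₀)
  refine squeeze_zero' (Eventually.of_forall fun _ => norm_nonneg _) ?_ hlim
  filter_upwards [eventually_ge_atTop (⌈4 * dist z z₀⌉₊ + 1)] with n hn
  have hn1 : 1 ≤ n := by omega
  have hn1' : (1 : ℝ) ≤ n := by exact_mod_cast hn1
  have hnz : 4 * dist z z₀ ≤ n := (Nat.le_ceil _).trans (by exact_mod_cast (by omega))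
  have hX : 1 ≤ (D * n) ^ (3 / 2 : ℝ) := by
    refine Real.one_le_rpow ?_ (by norm_num)
    have : 1 ≤ D := by simp only [D]; linarith [norm_nonneg z₀]
    nlinarith
  have := mef_hadamard_bound hf h0 (R := n) (M := M n) (by positivity) (by positivity) (by
    intro w hw
    refine (hb w).trans ?_
    have : ‖f z₀‖ * Real.exp (M n) = Real.exp (Real.log ‖f z₀‖ + M n) := by
      rw [Real.exp_add, Real.exp_log hfz0]
    rw [this]
    apply Real.exp_le_exp.2
    have hw' : 1 + ‖w‖ ≤ D * n := by
      rw [Metric.mem_sphere, dist_eq_norm] at hw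
      have : ‖w‖ ≤ ‖w - z₀‖ + ‖z₀‖ := by simpa using norm_add_le (w - z₀) z₀
      simp only [D]
      nlinarith [norm_nonneg z₀]
    have h1 : (1 + ‖w‖) ^ (3 / 2 : ℝ) ≤ (D * n) ^ (3 / 2 : ℝ) :=
      Real.rpow_le_rpow (by positivity) hw' (by norm_num)
    have h2 : A * (1 + ‖w‖) ^ (3 / 2 : ℝ) ≤ |A| * (D * n) ^ (3 / 2 : ℝ) :=
      mul_le_mul (le_abs_self _) h1 (by positivity) (by positivity)
    have h3 := neg_abs_le (Real.log ‖f z₀‖)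
    have h4 := abs_nonneg (Real.log ‖f z₀‖)
    simp only [M, B]
    nlinarith) (S n) (hS n) (z := z) (by linarith) hfz
  rw [norm_sub_rev]
  refine this.trans (le_of_eq ?_)
  have hn0 : (0 : ℝ) < n := by linarith
  simp only [M]
  rw [Real.mul_rpow hD.le hn0.le]
  have : (n : ℝ) ^ (-(1/2 : ℝ)) = (n : ℝ) ^ (3/2 : ℝ) / n ^ 2 := by
    rw [← Real.rpow_natCast, ← Real.rpow_sub hn0]; norm_num
  rw [this]
  ring

def mefFract : ℝ → ℂ := (Ioi (1 : ℝ)).indicator (fun t => ((Int.fract t : ℝ) : ℂ))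

lemma mefFract_norm_le (t : ℝ) : ‖mefFract t‖ ≤ 1 := by
  unfold mefFract
  by_cases h : t ∈ Ioi (1 : ℝ)
  · rw [indicator_of_mem h, Complex.norm_real, Real.norm_eq_abs, abs_of_nonneg (Int.fract_nonneg _)]
    exact (Int.fract_lt_one _).le
  · rw [indicator_of_notMem h]; simp

lemma mefFract_meas : Measurable mefFract := by
  unfold mefFract
  exact (Complex.measurable_ofReal.comp measurable_fract).indicator measurableSet_Ioi

lemma mefFract_diff {s : ℂ} (hs : s.re < 0) : DifferentiableAt ℂ (mellin mefFract) s := by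
  refine mellin_differentiableAt_of_isBigO_rpow (a := 0) (b := s.re - 1) ?_ ?_ (by simpa using hs) ?_
    (by linarith)
  · refine LocallyIntegrable.locallyIntegrableOn ?_ _
    have : LocallyIntegrable (fun _ : ℝ => (1 : ℝ)) := locallyIntegrable_const _
    refine this.mono mefFract_meas.aestronglyMeasurable (Eventually.of_forall fun t => ?_)
    simpa using mefFract_norm_le t
  · refine Asymptotics.IsBigO.of_bound 1 (Eventually.of_forall fun t => ?_)
    simpa using mefFract_norm_le t
  · refine Asymptotics.IsBigO.of_bound 1 ?_
    have : Iio (1 : ℝ) ∈ nhdsWithin 0 (Ioi 0) := mem_nhdsWithin_of_mem_nhds (Iio_mem_nhds one_pos)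
    filter_upwards [this] with t ht
    have : mefFract t = 0 := indicator_of_notMem (by simpa using ht.le) _
    rw [this]; simp

lemma mefFract_mellin (s : ℂ) :
    mellin mefFract (-s) = ∫ t in Ioi (1 : ℝ), ((Int.fract t : ℝ) : ℂ) * (t : ℂ) ^ (-(s + 1)) := by
  unfold mellin
  have : ∀ t : ℝ, (t : ℂ) ^ (-s - 1) • mefFract t =
      (Ioi (1 : ℝ)).indicator (fun t : ℝ => ((Int.fract t : ℝ) : ℂ) * (t : ℂ) ^ (-(s + 1))) t := by
    intro t
    unfold mefFract
    by_cases h : t ∈ Ioi (1 : ℝ)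
    · rw [indicator_of_mem h, indicator_of_mem h, smul_eq_mul, mul_comm]
      congr 2; ring
    · rw [indicator_of_notMem h, indicator_of_notMem h, smul_zero]
  simp_rw [this]
  rw [setIntegral_indicator measurableSet_Ioi]
  congr 2
  ext t; simp only [mem_inter_iff, mem_Ioi]
  constructor
  · exact fun h => h.2
  · exact fun h => ⟨by linarith, h⟩

lemma mefFract_mellin_norm {s : ℂ} (hs : 0 < s.re) : ‖mellin mefFract (-s)‖ ≤ 1 / s.re := by
  rw [mefFract_mellin]
  have hIoi := integral_Ioi_rpow_of_lt (a := -(s.re + 1)) (by linarith) one_pos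
  have : ∫ t in Ioi (1 : ℝ), t ^ (-(s.re + 1)) = 1 / s.re := by
    rw [hIoi]
    simp
  rw [← this]
  refine norm_integral_le_of_norm_le (integrableOn_Ioi_rpow_of_lt (by linarith) one_pos) ?_
  filter_upwards [ae_restrict_mem measurableSet_Ioi] with t ht
  have ht0 : 0 < t := lt_trans one_pos ht
  rw [norm_mul, Complex.norm_cpow_eq_rpow_re_of_pos ht0, Complex.norm_real, Real.norm_eq_abs,
    abs_of_nonneg (Int.fract_nonneg _)]
  simp only [neg_re, add_re, one_re]
  exact mul_le_of_le_one_left (by positivity) (Int.fract_lt_one _).le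

lemma mef_zeta1_of_one_lt {s : ℂ} (hs : 1 < s.re) :
    riemannZeta₁ s = s - s * (s - 1) * mellin mefFract (-s) := by
  have hs1 : s ≠ 1 := by rintro rfl; simp at hs
  have hs1' : s - 1 ≠ 0 := sub_ne_zero.2 hs1
  have h1 : riemannZeta s = s * ∫ t in Ioi (1 : ℝ), (⌊t⌋₊ : ℂ) * (t : ℂ) ^ (-(s + 1)) := by
    rw [← LSeries_one_eq_riemannZeta hs,
      LSeries_eq_mul_integral' (r := 1) 1 zero_le_one hs ?_]
    · simp
    · simp only [Pi.one_apply, norm_one, Finset.sum_const, Nat.card_Icc, add_tsub_cancel_right,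
        nsmul_eq_mul, mul_one, Real.rpow_one]
      exact Asymptotics.isBigO_refl _ _
  have h2 : ∫ t in Ioi (1 : ℝ), (⌊t⌋₊ : ℂ) * (t : ℂ) ^ (-(s + 1)) =
      (∫ t in Ioi (1 : ℝ), (t : ℂ) ^ (-s)) - mellin mefFract (-s) := by
    rw [mefFract_mellin, ← integral_sub]
    · refine setIntegral_congr_fun measurableSet_Ioi fun t ht => ?_
      have ht0 : (0 : ℝ) < t := lt_trans one_pos ht
      have ht0' : (t : ℂ) ≠ 0 := by exact_mod_cast ht0.ne'
      have e1 : (⌊t⌋₊ : ℂ) = (t : ℂ) - ((Int.fract t : ℝ) : ℂ) := by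
        rw [← Complex.ofReal_sub, Int.self_sub_fract]
        have : ((⌊t⌋₊ : ℝ)) = ((⌊t⌋ : ℤ) : ℝ) := natCast_floor_eq_intCast_floor ht0.le
        rw [← this]; simp
      have e2 : (t : ℂ) ^ (-s) = t * (t : ℂ) ^ (-(s + 1)) := by
        rw [show -s = 1 + (-(s + 1)) by ring, Complex.cpow_add _ _ ht0', Complex.cpow_one]
      rw [e1, e2]; ring
    · exact integrableOn_Ioi_cpow_of_lt (by simpa using hs) one_pos
    · refine Integrable.mono' (g := fun t => t ^ (-(s.re + 1)))
        (integrableOn_Ioi_rpow_of_lt (by linarith) one_pos) ?_ ?_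
      · refine AEStronglyMeasurable.mul
          (Complex.measurable_ofReal.comp measurable_fract).aestronglyMeasurable ?_
        refine ContinuousOn.aestronglyMeasurable ?_ measurableSet_Ioi
        intro t ht
        exact (continuousAt_ofReal_cpow_const _ _
          (Or.inr (lt_trans one_pos ht).ne')).continuousWithinAt
      · filter_upwards [ae_restrict_mem measurableSet_Ioi] with t ht
        have ht0 : 0 < t := lt_trans one_pos ht
        rw [norm_mul, Complex.norm_cpow_eq_rpow_re_of_pos ht0, Complex.norm_real,
          Real.norm_eq_abs, abs_of_nonneg (Int.fract_nonneg _)]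
        simp only [neg_re, add_re, one_re]
        exact mul_le_of_le_one_left (by positivity) (Int.fract_lt_one _).le
  have h3 : ∫ t in Ioi (1 : ℝ), (t : ℂ) ^ (-s) = 1 / (s - 1) := by
    rw [integral_Ioi_cpow_of_lt (by simpa using hs) one_pos]
    simp only [ofReal_one, one_cpow]
    rw [show -s + 1 = -(s - 1) by ring, neg_div_neg_eq]
  have h4 := riemannZeta_eq_inv_sub_mul hs1
  rw [h1, h2, h3] at h4
  field_simp at h4
  linear_combination -h4

lemma mef_zeta1_of_pos {s : ℂ} (hs : 0 < s.re) :
    riemannZeta₁ s = s - s * (s - 1) * mellin mefFract (-s) := by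
  have hU : IsOpen {s : ℂ | 0 < s.re} := isOpen_lt continuous_const Complex.continuous_re
  have hA : AnalyticOnNhd ℂ riemannZeta₁ {s : ℂ | 0 < s.re} :=
    fun z _ => differentiable_riemannZeta₁.analyticAt z
  have hB : AnalyticOnNhd ℂ (fun s => s - s * (s - 1) * mellin mefFract (-s)) {s : ℂ | 0 < s.re} := by
    refine DifferentiableOn.analyticOnNhd ?_ hU
    intro z hz
    have h1 : DifferentiableAt ℂ (fun s => mellin mefFract (-s)) z :=
      (mefFract_diff (s := -z) (by simpa using hz)).comp z (by fun_prop)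
    exact (DifferentiableAt.sub (by fun_prop) (DifferentiableAt.mul (by fun_prop) h1)).differentiableWithinAt
  have hc : IsPreconnected {s : ℂ | 0 < s.re} := (convex_halfSpace_re_gt 0).isPreconnected
  refine hA.eqOn_of_preconnected_of_eventuallyEq hB hc (z₀ := 2) (by simp) ?_ hs
  have : {s : ℂ | 1 < s.re} ∈ nhds (2 : ℂ) :=
    (isOpen_lt continuous_const Complex.continuous_re).mem_nhds (by simp)
  filter_upwards [this] with z hz
  exact mef_zeta1_of_one_lt hz

lemma mef_zeta1_right {s : ℂ} (hs : 1 / 2 ≤ s.re) : ‖riemannZeta₁ s‖ ≤ 3 * (1 + ‖s‖) ^ 2 := by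
  rw [mef_zeta1_of_pos (by linarith)]
  have h1 := mefFract_mellin_norm (s := s) (by linarith)
  have h2 : 1 / s.re ≤ 2 := by
    rw [div_le_iff₀ (by linarith)]; linarith
  have h3 : ‖s - 1‖ ≤ ‖s‖ + 1 := by simpa using norm_sub_le s 1
  calc _ ≤ ‖s‖ + ‖s * (s - 1) * mellin mefFract (-s)‖ := norm_sub_le _ _
    _ = ‖s‖ + ‖s‖ * ‖s - 1‖ * ‖mellin mefFract (-s)‖ := by rw [norm_mul, norm_mul]
    _ ≤ ‖s‖ + ‖s‖ * (‖s‖ + 1) * 2 := by gcongr; linarith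
    _ ≤ _ := by nlinarith [norm_nonneg s]

lemma mef_Gamma_norm_le {s : ℂ} (hs : 0 < s.re) : ‖Complex.Gamma s‖ ≤ Real.Gamma s.re := by
  rw [Complex.Gamma_eq_integral hs, Complex.GammaIntegral, Real.Gamma_eq_integral hs]
  refine norm_integral_le_of_norm_le (Real.GammaIntegral_convergent hs) ?_
  filter_upwards [ae_restrict_mem measurableSet_Ioi] with t ht
  rw [norm_mul, Complex.norm_cpow_eq_rpow_re_of_pos ht, Complex.norm_real]
  simp

lemma mef_Gamma_real {x r : ℝ} (hx : 1 / 2 ≤ x) (hr : 1 ≤ r) (hxr : x ≤ r) :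
    Real.Gamma x ≤ Real.exp (18 * r ^ (3 / 2 : ℝ)) := by
  have hx0 : 0 < x := by linarith
  have e1 : Real.Gamma (x + 2) = (x + 1) * (x * Real.Gamma x) := by
    rw [show x + 2 = (x + 1) + 1 by ring, Real.Gamma_add_one (by linarith),
      Real.Gamma_add_one hx0.ne']
  have hg := Real.Gamma_pos_of_pos hx0
  have h1 : Real.Gamma x ≤ 2 * Real.Gamma (x + 2) := by
    rw [e1]
    have : (3 : ℝ) / 4 ≤ (x + 1) * x := by nlinarith
    nlinarith
  set N := ⌈r⌉₊
  have hN : r ≤ N := Nat.le_ceil r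
  have hN' : (N : ℝ) < r + 1 := Nat.ceil_lt_add_one (by linarith)
  have h2 : Real.Gamma (x + 2) ≤ Real.Gamma ((N + 2 : ℕ) + 1) := by
    refine Real.Gamma_strictMonoOn_Ici.monotoneOn ?_ ?_ ?_
    · simp; linarith
    · simp only [mem_Ici]; push_cast; linarith
    · push_cast; linarith
  rw [Real.Gamma_nat_eq_factorial] at h2
  have h3 : ((N + 2).factorial : ℝ) ≤ ((N + 2 : ℕ) : ℝ) ^ (N + 2) := by
    exact_mod_cast Nat.factorial_le_pow (N + 2)
  have hN4 : ((N + 2 : ℕ) : ℝ) ≤ 4 * r := by push_cast; linarith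
  have hNpos : (0 : ℝ) < ((N + 2 : ℕ) : ℝ) := by positivity
  have h4 : ((N + 2 : ℕ) : ℝ) ^ (N + 2) ≤ Real.exp (16 * r ^ (3 / 2 : ℝ)) := by
    have hl : Real.log (4 * r) ≤ 4 * r ^ (1 / 2 : ℝ) := by
      have := Real.log_le_sub_one_of_pos (x := r ^ (1 / 2 : ℝ) ) (by positivity)
      have h2' := Real.log_le_sub_one_of_pos (x := 2) (by positivity)
      rw [Real.log_rpow (by linarith)] at this
      rw [Real.log_mul (by norm_num) (by linarith), show (4 : ℝ) = 2 ^ 2 by norm_num, Real.log_pow]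
      have h5 : 1 ≤ r ^ (1 / 2 : ℝ) := Real.one_le_rpow hr (by norm_num)
      push_cast
      linarith
    have hp : ((N + 2 : ℕ) : ℝ) ^ (N + 2) =
        Real.exp (((N + 2 : ℕ) : ℝ) * Real.log ((N + 2 : ℕ) : ℝ)) := by
      rw [mul_comm, Real.exp_mul, Real.exp_log hNpos, Real.rpow_natCast]
    rw [hp]
    apply Real.exp_le_exp.2
    have h6 : Real.log ((N + 2 : ℕ) : ℝ) ≤ 4 * r ^ (1 / 2 : ℝ) :=
      (Real.log_le_log hNpos hN4).trans hl
    have h7 : r ^ (3 / 2 : ℝ) = r * r ^ (1 / 2 : ℝ) := by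
      rw [show (3 / 2 : ℝ) = 1 + 1 / 2 by norm_num, Real.rpow_add (by linarith), Real.rpow_one]
    rw [h7]
    calc _ ≤ (4 * r) * (4 * r ^ (1 / 2 : ℝ)) :=
          mul_le_mul hN4 h6 (Real.log_nonneg (by push_cast; linarith)) (by linarith)
      _ = _ := by ring
  have h8 : (2 : ℝ) ≤ Real.exp (2 * r ^ (3 / 2 : ℝ)) := by
    have : 1 ≤ r ^ (3 / 2 : ℝ) := Real.one_le_rpow hr (by norm_num)
    linarith [Real.add_one_le_exp (2 * r ^ (3 / 2 : ℝ))]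
  calc Real.Gamma x ≤ 2 * Real.exp (16 * r ^ (3 / 2 : ℝ)) := by linarith
    _ ≤ Real.exp (2 * r ^ (3 / 2 : ℝ)) * Real.exp (16 * r ^ (3 / 2 : ℝ)) := by gcongr
    _ = _ := by rw [← Real.exp_add]; congr 1; ring

lemma mef_cos_norm_le (z : ℂ) : ‖Complex.cos z‖ ≤ Real.exp ‖z‖ := by
  unfold Complex.cos
  have h1 : ‖Complex.exp (z * I)‖ ≤ Real.exp ‖z‖ := by
    simpa using Complex.norm_exp_le_exp_norm (z * I)
  have h2 : ‖Complex.exp (-z * I)‖ ≤ Real.exp ‖z‖ := by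
    simpa using Complex.norm_exp_le_exp_norm (-z * I)
  rw [norm_div]
  have := norm_add_le (Complex.exp (z * I)) (Complex.exp (-z * I))
  simp only [Complex.norm_ofNat]
  linarith

lemma mef_zeta1_growth : ∃ A : ℝ, ∀ z,
    ‖riemannZeta₁ z‖ ≤ Real.exp (A * (1 + ‖z‖) ^ (3 / 2 : ℝ)) := by
  obtain ⟨C0, hC0⟩ := (isCompact_closedBall (0 : ℂ) 1).exists_bound_of_continuousOn
    differentiable_riemannZeta₁.continuous.continuousOn
  refine ⟨|C0| + 40, fun s => ?_⟩
  set r := 1 + ‖s‖ with hr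
  have hr1 : 1 ≤ r := by simp [hr]
  have hrr : r ≤ r ^ (3 / 2 : ℝ) := by
    conv_lhs => rw [← Real.rpow_one r]
    exact Real.rpow_le_rpow_of_exponent_le hr1 (by norm_num)
  have hr3 : 1 ≤ r ^ (3 / 2 : ℝ) := hr1.trans hrr
  have hab := abs_nonneg C0
  have hexp1 : ∀ x : ℝ, 1 + x ≤ Real.exp x := fun x => by linarith [Real.add_one_le_exp x]
  have hpoly : r ≤ Real.exp r := by linarith [hexp1 r]
  rcases le_total ‖s‖ 1 with h | h
  · refine (hC0 s (by simpa using h)).trans ?_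
    refine (le_abs_self C0).trans ((by linarith : |C0| ≤ 1 + |C0|).trans ((hexp1 |C0|).trans ?_))
    apply Real.exp_le_exp.2
    nlinarith
  rcases le_total (1 / 2) s.re with h2 | h2
  · refine (mef_zeta1_right h2).trans ?_
    have h3 : (3 : ℝ) ≤ Real.exp (2 * r) := by linarith [hexp1 (2 * r)]
    calc 3 * (1 + ‖s‖) ^ 2 ≤ Real.exp (2 * r) * (Real.exp r) ^ 2 := by gcongr
      _ = Real.exp (4 * r) := by rw [← Real.exp_nat_mul, ← Real.exp_add]; congr 1; push_cast; ring
      _ ≤ _ := by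
        apply Real.exp_le_exp.2
        nlinarith
  · set w := 1 - s with hw
    have hwre : 1 / 2 ≤ w.re := by simp [hw]; linarith
    have hwn : ‖w‖ ≤ r := by simpa [hr] using norm_sub_le 1 s
    have hw1 : ‖w - 1‖ = ‖s‖ := by simp [hw]
    have hs1 : s ≠ 1 := by rintro rfl; norm_num at h2
    have hw1' : w ≠ 1 := by
      intro h3
      rw [h3, sub_self, norm_zero] at hw1
      linarith
    have hFE := riemannZeta_one_sub (s := w) (by
      intro n hn
      rw [hn] at hwre
      simp at hwre
      have : (0 : ℝ) ≤ n := Nat.cast_nonneg n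
      linarith) hw1'
    have hs' : 1 - w = s := by simp [hw]
    rw [hs'] at hFE
    have e1 : riemannZeta₁ s = (s - 1) * riemannZeta s := by
      rw [riemannZeta_eq_inv_sub_mul hs1]
      field_simp [sub_ne_zero.2 hs1]
    have hzw : ‖riemannZeta w‖ ≤ 3 * (1 + r) ^ 2 := by
      rw [riemannZeta_eq_inv_sub_mul hw1', norm_mul, norm_inv, hw1]
      have h4 := mef_zeta1_right hwre
      have h5 : ‖s‖⁻¹ ≤ 1 := inv_le_one_of_one_le₀ h
      calc _ ≤ 1 * ‖riemannZeta₁ w‖ := by gcongr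
        _ ≤ 3 * (1 + ‖w‖) ^ 2 := by linarith
        _ ≤ _ := by gcongr
    have hpw : ‖(2 * (π : ℂ)) ^ (-w)‖ ≤ 1 := by
      have : (2 * (π : ℂ)) = ((2 * π : ℝ) : ℂ) := by push_cast; ring
      rw [this, Complex.norm_cpow_eq_rpow_re_of_pos (by positivity)]
      refine Real.rpow_le_one_of_one_le_of_nonpos (by linarith [Real.pi_gt_three]) ?_
      simp only [neg_re]; linarith
    have hG : ‖Complex.Gamma w‖ ≤ Real.exp (18 * r ^ (3 / 2 : ℝ)) :=
      (mef_Gamma_norm_le (by linarith)).trans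
        (mef_Gamma_real hwre hr1 ((Complex.re_le_norm w).trans hwn))
    have hc : ‖Complex.cos (π * w / 2)‖ ≤ Real.exp (2 * r) := by
      refine (mef_cos_norm_le _).trans (Real.exp_le_exp.2 ?_)
      rw [norm_div, norm_mul, Complex.norm_real, Real.norm_eq_abs, abs_of_pos Real.pi_pos]
      simp only [Complex.norm_ofNat]
      nlinarith [Real.pi_lt_four, Real.pi_pos, norm_nonneg w]
    have hs1n : ‖s - 1‖ ≤ r := by
      have : s - 1 = -w := by rw [hw]; ring
      rw [this, norm_neg]; exact hwn
    rw [e1, hFE, norm_mul, norm_mul, norm_mul, norm_mul, norm_mul]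
    simp only [Complex.norm_ofNat]
    have h6 : (6 : ℝ) ≤ Real.exp (5 * r) := by linarith [hexp1 (5 * r)]
    calc _ ≤ r * (2 * 1 * Real.exp (18 * r ^ (3 / 2 : ℝ)) * Real.exp (2 * r) * (3 * (1 + r) ^ 2)) := by
          gcongr
      _ = 6 * r * (1 + r) ^ 2 * Real.exp (18 * r ^ (3 / 2 : ℝ)) * Real.exp (2 * r) := by ring
      _ ≤ Real.exp (5 * r) * Real.exp r * (Real.exp r) ^ 2 * Real.exp (18 * r ^ (3 / 2 : ℝ))
          * Real.exp (2 * r) := by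
          gcongr; exact hexp1 r
      _ = Real.exp (10 * r + 18 * r ^ (3 / 2 : ℝ)) := by
          rw [← Real.exp_nat_mul, ← Real.exp_add, ← Real.exp_add, ← Real.exp_add, ← Real.exp_add]
          congr 1; push_cast; ring
      _ ≤ _ := by
          apply Real.exp_le_exp.2
          nlinarith

lemma mef_cderiv_tendsto {F : ℕ → ℂ → ℂ} {f : ℂ → ℂ} {U : Set ℂ} (hU : IsOpen U) {z : ℂ} {r M : ℝ}
    (hr : 0 < r) (hzr : Metric.closedBall z r ⊆ U)
    (hF : ∀ᶠ n in atTop, DifferentiableOn ℂ (F n) U) (hf : DifferentiableOn ℂ f U)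
    (hM : ∀ᶠ n in atTop, ∀ w ∈ U, ‖F n w‖ ≤ M)
    (ht : ∀ w ∈ U, Tendsto (fun n => F n w) atTop (nhds (f w))) :
    Tendsto (fun n => deriv (F n) z) atTop (nhds (deriv f z)) := by
  have h1 : ∀ᶠ n in atTop, Complex.cderiv r (F n) z = deriv (F n) z := by
    filter_upwards [hF] with n hn
    exact Complex.cderiv_eq_deriv hU hn hr hzr
  refine Tendsto.congr' h1 ?_
  rw [← Complex.cderiv_eq_deriv hU hf hr hzr]
  unfold Complex.cderiv
  refine Tendsto.const_smul ?_ _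
  unfold circleIntegral
  have hmem : ∀ θ, circleMap z r θ ∈ U := fun θ => hzr (circleMap_mem_closedBall z hr.le θ)
  refine intervalIntegral.tendsto_integral_filter_of_dominated_convergence
    (fun _ => |r| * ((r ^ 2)⁻¹ * M)) ?_ ?_ ?_ ?_
  · filter_upwards [hF] with n hn
    refine Continuous.aestronglyMeasurable ?_
    have hc : Continuous fun θ => F n (circleMap z r θ) :=
      hn.continuousOn.comp_continuous (continuous_circleMap z r) hmem
    refine Continuous.smul (M := ℂ) ?_ (Continuous.smul (M := ℂ) ?_ hc)
    · have e : deriv (circleMap z r) = fun θ => circleMap 0 r θ * Complex.I := by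
        ext θ; simp [deriv_circleMap]
      rw [e]; fun_prop
    · refine Continuous.inv₀ (by fun_prop) ?_
      intro θ
      have : circleMap z r θ - z ≠ 0 := sub_ne_zero.2 (circleMap_ne_center hr.ne')
      positivity
  · filter_upwards [hM] with n hn
    refine Eventually.of_forall fun θ _ => ?_
    have := hn _ (hmem θ)
    rw [norm_smul, norm_smul, deriv_circleMap]
    simp only [norm_mul, norm_inv, norm_pow, norm_circleMap_zero, Complex.norm_I, mul_one,
      circleMap_sub_center, sq_abs]
    gcongr
  · exact intervalIntegrable_const
  · refine Eventually.of_forall fun θ _ => ?_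
    exact ((ht _ (hmem θ)).const_smul _).const_smul _

lemma mef_GammaSeq_norm_le {s : ℂ} (hs : 0 < s.re) {n : ℕ} (hn : n ≠ 0) :
    ‖Complex.GammaSeq s n‖ ≤ Real.Gamma s.re := by
  rw [Complex.GammaSeq_eq_approx_Gamma_integral hs hn, Real.Gamma_eq_integral hs,
    intervalIntegral.integral_of_le (by positivity)]
  calc _ ≤ ∫ x in Ioc 0 (n : ℝ), Real.exp (-x) * x ^ (s.re - 1) := by
        refine norm_integral_le_of_norm_le
          ((Real.GammaIntegral_convergent hs).mono_set Ioc_subset_Ioi_self) ?_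
        refine (ae_restrict_iff' measurableSet_Ioc).2 (ae_of_all _ fun x hx => ?_)
        rw [norm_mul, Complex.norm_cpow_eq_rpow_re_of_pos hx.1, Complex.norm_real]
        simp only [sub_re, one_re]
        refine mul_le_mul_of_nonneg_right ?_ (Real.rpow_nonneg hx.1.le _)
        have h0 : 0 ≤ 1 - x / n := by
          rw [sub_nonneg, div_le_one (by positivity)]; exact hx.2
        rw [Real.norm_of_nonneg (by positivity)]
        exact one_sub_div_pow_le_exp_neg hx.2
    _ ≤ _ := by
        refine setIntegral_mono_set (Real.GammaIntegral_convergent hs) ?_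
          Ioc_subset_Ioi_self.eventuallyLE
        refine (ae_restrict_iff' measurableSet_Ioi).2 (ae_of_all _ fun x hx => ?_)
        have : 0 < x := hx
        simp only [Pi.zero_apply]; positivity

lemma mef_GammaSeq_ne {s : ℂ} (hs : 0 < s.re) (j : ℕ) : s + j ≠ 0 := by
  intro h
  have := congrArg Complex.re h
  simp at this
  have := Nat.cast_nonneg (α := ℝ) j
  linarith

lemma mef_GammaSeq_logDeriv {s : ℂ} (hs : 0 < s.re) {n : ℕ} (hn : n ≠ 0) :
    HasDerivAt (fun s => Complex.GammaSeq s n)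
      (Complex.GammaSeq s n * ((Real.log n : ℂ) - ∑ j ∈ Finset.range (n + 1), 1 / (s + j))) s := by
  have h1 : HasDerivAt (fun s : ℂ => (n : ℂ) ^ s) ((n : ℂ) ^ s * Complex.log n) s := by
    simpa using (hasDerivAt_id s).const_cpow (c := (n : ℂ)) (Or.inl (by exact_mod_cast hn))
  have h2 : HasDerivAt (fun s : ℂ => ∏ j ∈ Finset.range (n + 1), (s + j))
      ((∏ j ∈ Finset.range (n + 1), (s + j)) * ∑ j ∈ Finset.range (n + 1), 1 / (s + j)) s := by
    have hd : DifferentiableAt ℂ (fun s : ℂ => ∏ j ∈ Finset.range (n + 1), (s + j)) s := by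
      fun_prop
    have h3 : logDeriv (fun s : ℂ => ∏ j ∈ Finset.range (n + 1), (s + j)) s
        = ∑ j ∈ Finset.range (n + 1), 1 / (s + j) := by
      rw [logDeriv_prod]
      · refine Finset.sum_congr rfl fun j _ => ?_
        simp [logDeriv_apply]
      · intro j _; exact mef_GammaSeq_ne hs j
      · intro j _; fun_prop
    rw [← h3, logDeriv_apply, mul_div_cancel₀]
    · exact hd.hasDerivAt
    · exact Finset.prod_ne_zero_iff.2 fun j _ => mef_GammaSeq_ne hs j
  have h4 : ∏ j ∈ Finset.range (n + 1), (s + j) ≠ 0 :=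
    Finset.prod_ne_zero_iff.2 fun j _ => mef_GammaSeq_ne hs j
  have h5 := (h1.mul_const ((Nat.factorial n : ℕ) : ℂ)).div h2 h4
  unfold Complex.GammaSeq
  refine h5.congr_deriv ?_
  rw [show ((Real.log n : ℝ) : ℂ) = Complex.log n by
    rw [Complex.ofReal_log (by positivity)]; simp]
  generalize ∑ j ∈ Finset.range (n + 1), 1 / (s + (j : ℂ)) = S at *
  field_simp

lemma mef_digamma_tendsto {s : ℂ} (hs : 1 < s.re) :
    Tendsto (fun n : ℕ => (Real.log n : ℂ) - ∑ j ∈ Finset.range (n + 1), 1 / (s + j)) atTop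
      (nhds (logDeriv Complex.Gamma s)) := by
  set U : Set ℂ := {z | s.re - 1 < z.re ∧ z.re < s.re + 1} with hU
  have hUo : IsOpen U := (isOpen_lt continuous_const Complex.continuous_re).inter
    (isOpen_lt Complex.continuous_re continuous_const)
  have hpos : ∀ z ∈ U, 0 < z.re := fun z hz => by have := hz.1; linarith
  obtain ⟨M, hM⟩ := (isCompact_Icc (a := s.re - 1) (b := s.re + 1)).exists_bound_of_continuousOn
    (f := Real.Gamma) (fun x hx => by
      refine (Real.differentiableAt_Gamma fun m => ?_).continuousAt.continuousWithinAt
      have := hx.1; have := Nat.cast_nonneg (α := ℝ) m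
      intro h; linarith)
  have key := mef_cderiv_tendsto (F := fun n z => Complex.GammaSeq z n) (f := Complex.Gamma)
    hUo (z := s) (r := 1 / 2) (M := M) (by norm_num) (by
      intro z hz
      have h1 := Complex.abs_re_le_norm (z - s)
      rw [Metric.mem_closedBall, dist_eq_norm] at hz
      have h2 := abs_le.1 (h1.trans hz)
      simp at h2
      constructor <;> linarith) ?_ ?_ ?_ ?_
  · have hG : Complex.Gamma s ≠ 0 := Complex.Gamma_ne_zero_of_re_pos (by linarith)
    have h1 := key.div (Complex.GammaSeq_tendsto_Gamma s) hG
    rw [← logDeriv_apply] at h1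
    refine h1.congr' ?_
    filter_upwards [eventually_ne_atTop 0] with n hn
    have h0 : Complex.GammaSeq s n ≠ 0 := by
      unfold Complex.GammaSeq
      refine div_ne_zero (mul_ne_zero ?_ ?_) (Finset.prod_ne_zero_iff.2 fun j _ =>
        mef_GammaSeq_ne (by linarith) j)
      · rw [Ne, Complex.cpow_eq_zero_iff]; simp [hn]
      · exact_mod_cast Nat.factorial_ne_zero n
    simp only [Pi.div_apply]
    rw [(mef_GammaSeq_logDeriv (by linarith) hn).deriv, mul_div_cancel_left₀ _ h0]
  · filter_upwards [eventually_ne_atTop 0] with n hn z hz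
    exact (mef_GammaSeq_logDeriv (hpos z hz) hn).differentiableAt.differentiableWithinAt
  · intro z hz
    refine (Complex.differentiableAt_Gamma _ fun m h => ?_).differentiableWithinAt
    have := hpos z hz
    rw [h] at this
    simp at this
    have := Nat.cast_nonneg (α := ℝ) m
    linarith
  · filter_upwards [eventually_ne_atTop 0] with n hn z hz
    refine (mef_GammaSeq_norm_le (hpos z hz) hn).trans ((le_abs_self _).trans (hM _ ?_))
    exact ⟨hz.1.le, hz.2.le⟩
  · intro z _
    exact Complex.GammaSeq_tendsto_Gamma z

lemma mef_log_step {z : ℂ} (hz : 3 / 2 ≤ z.re) :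
    ‖Complex.log (z + 1) - Complex.log z - 1 / z‖ ≤ 3 / 2 * (1 / z.re) ^ 2 := by
  have hz0 : z ≠ 0 := by rintro rfl; norm_num at hz
  have hn : z.re ≤ ‖z‖ := Complex.re_le_norm z
  have hn' : ‖1 / z‖ ≤ 1 / z.re := by
    rw [norm_div, norm_one]; exact one_div_le_one_div_of_le (by linarith) hn
  have h23 : 1 / z.re ≤ 2 / 3 := by
    rw [div_le_div_iff₀ (by linarith) (by norm_num)]; linarith
  have h1 : ‖1 / z‖ < 1 := by linarith
  have h2 := Complex.norm_log_one_add_sub_self_le h1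
  have hre : 0 < (1 + 1 / z).re := by
    have := Complex.abs_re_le_norm (1 / z)
    have := (abs_le.1 (this.trans (hn'.trans h23))).1
    rw [Complex.add_re, Complex.one_re]; linarith
  have h3 : Complex.log (z * (1 + 1 / z)) = Complex.log z + Complex.log (1 + 1 / z) := by
    rw [Complex.log_mul_eq_add_log_iff hz0 (by intro h; rw [h] at hre; simp at hre)]
    have a1 := Complex.abs_arg_lt_pi_div_two_iff.2 (Or.inl (show 0 < z.re by linarith))
    have a2 := Complex.abs_arg_lt_pi_div_two_iff.2 (Or.inl hre)
    rw [abs_lt] at a1 a2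
    constructor <;> linarith
  rw [show z * (1 + 1 / z) = z + 1 by field_simp] at h3
  rw [h3, show Complex.log z + Complex.log (1 + 1 / z) - Complex.log z - 1 / z
    = Complex.log (1 + 1 / z) - 1 / z by ring]
  refine h2.trans ?_
  have h4 : (1 - ‖1 / z‖)⁻¹ ≤ 3 := by
    rw [inv_le_comm₀ (by linarith) (by norm_num)]; linarith
  have h5 : ‖1 / z‖ ^ 2 ≤ (1 / z.re) ^ 2 := by gcongr
  have h6 : 0 ≤ (1 - ‖1 / z‖)⁻¹ := inv_nonneg.2 (by linarith)
  have : ‖1 / z‖ ^ 2 * (1 - ‖1 / z‖)⁻¹ ≤ (1 / z.re) ^ 2 * 3 := by gcongr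
  linarith

lemma mef_log_sum {s : ℂ} (hs : s.re = 3 / 2) (n : ℕ) :
    ‖Complex.log (s + n) - Complex.log s - ∑ j ∈ Finset.range n, 1 / (s + j)‖
      ≤ 3 / 2 * (1 - 1 / ((n : ℝ) + 1)) := by
  induction n with
  | zero => simp
  | succ k ih =>
    rw [Finset.sum_range_succ]
    have hk : 3 / 2 ≤ (s + k).re := by simp [hs]
    have h := mef_log_step hk
    have e : Complex.log (s + (k + 1 : ℕ)) - Complex.log s
        - (∑ j ∈ Finset.range k, 1 / (s + j) + 1 / (s + k))
        = (Complex.log (s + k) - Complex.log s - ∑ j ∈ Finset.range k, 1 / (s + j))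
        + (Complex.log (s + k + 1) - Complex.log (s + k) - 1 / (s + k)) := by
      push_cast; rw [← add_assoc]; ring
    rw [e]
    refine (norm_add_le _ _).trans ((add_le_add ih h).trans ?_)
    simp only [Complex.add_re, Complex.natCast_re, hs]
    have hk0 : (0 : ℝ) ≤ k := Nat.cast_nonneg k
    have : (1 / (3 / 2 + (k : ℝ))) ^ 2 ≤ 1 / ((k : ℝ) + 1) - 1 / ((k : ℝ) + 1 + 1) := by
      rw [div_pow, div_sub_div _ _ (by positivity) (by positivity),
        div_le_div_iff₀ (by positivity) (by positivity)]
      nlinarith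
    push_cast
    linarith

lemma mef_log_n {s : ℂ} :
    Tendsto (fun n : ℕ => (Real.log n : ℂ) - Complex.log (s + (n + 1 : ℕ))) atTop (nhds 0) := by
  have h1 : Tendsto (fun n : ℕ => Complex.log (1 + (s + 1) * ((1 : ℝ) / (n : ℝ) : ℝ))) atTop
      (nhds (Complex.log (1 + (s + 1) * ((0 : ℝ) : ℂ)))) := by
    refine Tendsto.clog ?_ (by simp)
    refine tendsto_const_nhds.add (tendsto_const_nhds.mul ?_)
    exact (Complex.continuous_ofReal.tendsto 0).comp tendsto_one_div_atTop_nhds_zero_nat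
  have h2 := h1.neg
  simp only [ofReal_zero, mul_zero, add_zero, Complex.log_one, neg_zero] at h2
  refine h2.congr' ?_
  have hev : ∀ᶠ n : ℕ in atTop, 1 + (s + 1) * ((1 : ℝ) / (n : ℝ) : ℝ) ≠ (0 : ℂ) := by
    have : Tendsto (fun n : ℕ => (1 + (s + 1) * ((1 : ℝ) / (n : ℝ) : ℝ) : ℂ)) atTop
        (nhds (1 + (s + 1) * ((0 : ℝ) : ℂ))) := by
      refine tendsto_const_nhds.add (tendsto_const_nhds.mul ?_)
      exact (Complex.continuous_ofReal.tendsto 0).comp tendsto_one_div_atTop_nhds_zero_nat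
    exact this.eventually_ne (by simp)
  filter_upwards [eventually_ne_atTop 0, hev] with n hn hne
  have hn' : (0 : ℝ) < n := by positivity
  have hnc : (n : ℂ) ≠ 0 := by exact_mod_cast hn
  have := Complex.log_ofReal_mul hn' hne
  rw [show s + (n + 1 : ℕ) = ((n : ℝ) : ℂ) * (1 + (s + 1) * ((1 : ℝ) / (n : ℝ) : ℝ)) by
    push_cast; field_simp; ring, this]
  ring

lemma mef_digamma_bound {s : ℂ} (hs : s.re = 3 / 2) :
    ‖logDeriv Complex.Gamma s - Complex.log s‖ ≤ 3 / 2 := by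
  have h1 := ((mef_digamma_tendsto (s := s) (by linarith)).sub (mef_log_n (s := s))).sub_const
    (Complex.log s)
  rw [sub_zero] at h1
  refine le_of_tendsto h1.norm (Eventually.of_forall fun n => ?_)
  have h2 := mef_log_sum hs (n + 1)
  have h3 : (0 : ℝ) ≤ 1 / (((n + 1 : ℕ) : ℝ) + 1) := by positivity
  have e : (Real.log n : ℂ) - ∑ j ∈ Finset.range (n + 1), 1 / (s + j)
      - ((Real.log n : ℂ) - Complex.log (s + (n + 1 : ℕ))) - Complex.log s
      = Complex.log (s + (n + 1 : ℕ)) - Complex.log s - ∑ j ∈ Finset.range (n + 1), 1 / (s + j) := by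
    ring
  rw [e]
  linarith

lemma mef_log_bound (t : ℝ) :
    ‖Complex.log (3 / 2 - Complex.I * t) - (Real.log (|t| + 2) : ℂ)‖ ≤ 4 := by
  set s : ℂ := 3 / 2 - Complex.I * t with hs
  have hre : s.re = 3 / 2 := by simp [hs]
  have him : s.im = -t := by simp [hs]
  have hn1 : ‖s‖ ≤ |t| + 2 := by
    refine (Complex.norm_le_abs_re_add_abs_im s).trans ?_
    rw [hre, him, abs_neg]; norm_num; linarith [abs_nonneg t]
  have hn2 : (|t| + 2) / 3 ≤ ‖s‖ := by
    have h1 := Complex.abs_re_le_norm s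
    have h2 := Complex.abs_im_le_norm s
    rw [hre] at h1; rw [him, abs_neg] at h2
    norm_num at h1
    linarith
  have hpos : 0 < |t| + 2 := by positivity
  have harg := Complex.abs_arg_lt_pi_div_two_iff.2 (Or.inl (show 0 < s.re by rw [hre]; norm_num))
  refine (Complex.norm_le_abs_re_add_abs_im _).trans ?_
  have hre2 : (Complex.log s - (Real.log (|t| + 2) : ℂ)).re = Real.log ‖s‖ - Real.log (|t| + 2) := by
    simp [Complex.log_re]
  have him2 : (Complex.log s - (Real.log (|t| + 2) : ℂ)).im = Complex.arg s := by
    rw [Complex.sub_im, Complex.ofReal_im, Complex.log_im, sub_zero]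
  rw [hre2, him2]
  have hl1 : Real.log ‖s‖ ≤ Real.log (|t| + 2) := Real.log_le_log (by linarith [div_pos hpos (by norm_num : (0:ℝ) < 3)]) hn1
  have hl2 : Real.log (|t| + 2) - Real.log 3 ≤ Real.log ‖s‖ := by
    rw [← Real.log_div hpos.ne' (by norm_num)]
    exact Real.log_le_log (by positivity) hn2
  have hl3 : Real.log 3 ≤ 2 := by
    have := Real.log_le_sub_one_of_pos (show (0 : ℝ) < 3 by norm_num); linarith
  have : |Real.log ‖s‖ - Real.log (|t| + 2)| ≤ 2 := by rw [abs_le]; constructor <;> linarith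
  have := Real.pi_lt_four
  linarith

/-- The smooth factor in the functional equation. -/
def mefG (s : ℂ) : ℂ := (2 * π : ℂ) ^ (-s) * Complex.Gamma s * riemannZeta s

lemma mef_FE {s : ℂ} (hs : 1 < s.re) :
    riemannZeta (1 - s) = 2 * mefG s * Complex.cos (π * s / 2) := by
  rw [riemannZeta_one_sub, mefG]
  · ring
  · intro n h
    rw [h] at hs
    simp at hs
    have := Nat.cast_nonneg (α := ℝ) n
    linarith
  · rintro rfl
    simp at hs

lemma mef_two_pi_ne : (2 * π : ℂ) ≠ 0 := by
  exact_mod_cast (by positivity : (2 * π : ℝ) ≠ 0)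

lemma mef_G_ne {s : ℂ} (hs : 1 < s.re) : mefG s ≠ 0 := by
  unfold mefG
  refine mul_ne_zero (mul_ne_zero ?_ (Complex.Gamma_ne_zero_of_re_pos (by linarith)))
    (riemannZeta_ne_zero_of_one_lt_re hs)
  rw [Ne, Complex.cpow_eq_zero_iff]
  simp

lemma mef_Gamma_diff {s : ℂ} (hs : 0 < s.re) : DifferentiableAt ℂ Complex.Gamma s := by
  refine Complex.differentiableAt_Gamma _ fun m h => ?_
  rw [h] at hs
  simp at hs
  have := Nat.cast_nonneg (α := ℝ) m
  linarith

lemma mef_zeta_diff {s : ℂ} (hs : 1 < s.re) : DifferentiableAt ℂ riemannZeta s :=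
  differentiableAt_riemannZeta (by rintro rfl; simp at hs)

lemma mef_pow_deriv (s : ℂ) : HasDerivAt (fun z : ℂ => (2 * π : ℂ) ^ (-z))
    ((2 * π : ℂ) ^ (-s) * (-(Real.log (2 * π) : ℂ))) s := by
  have := (hasDerivAt_neg s).const_cpow (c := (2 * π : ℂ)) (Or.inl mef_two_pi_ne)
  refine this.congr_deriv ?_
  rw [Complex.ofReal_log (by positivity)]
  push_cast
  ring

lemma mef_G_diff {s : ℂ} (hs : 1 < s.re) : DifferentiableAt ℂ mefG s := by
  unfold mefG
  exact ((mef_pow_deriv s).differentiableAt.mul (mef_Gamma_diff (by linarith))).mul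
    (mef_zeta_diff hs)

lemma mef_G_logDeriv {s : ℂ} (hs : 1 < s.re) :
    logDeriv mefG s = -(Real.log (2 * π) : ℂ) + logDeriv Complex.Gamma s + logDeriv riemannZeta s := by
  unfold mefG
  have h1 : (2 * π : ℂ) ^ (-s) ≠ 0 := by
    rw [Ne, Complex.cpow_eq_zero_iff]
    simp
  have h2 := Complex.Gamma_ne_zero_of_re_pos (s := s) (by linarith)
  rw [logDeriv_mul (f := fun s => (2 * π : ℂ) ^ (-s) * Complex.Gamma s) (g := riemannZeta) s
    (mul_ne_zero h1 h2) (riemannZeta_ne_zero_of_one_lt_re hs)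
    ((mef_pow_deriv s).differentiableAt.mul (mef_Gamma_diff (by linarith))) (mef_zeta_diff hs),
    logDeriv_mul (f := fun s => (2 * π : ℂ) ^ (-s)) (g := Complex.Gamma) s h1 h2 (mef_pow_deriv s).differentiableAt (mef_Gamma_diff (by linarith))]
  congr 2
  rw [logDeriv_apply, (mef_pow_deriv s).deriv, mul_div_cancel_left₀ _ h1]

lemma mef_FE_deriv {s : ℂ} (hs : 1 < s.re) :
    HasDerivAt (fun s => riemannZeta (1 - s))
      (2 * deriv mefG s * Complex.cos (π * s / 2)
        - 2 * mefG s * (Complex.sin (π * s / 2) * (π / 2))) s := by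
  have h1 : (fun s => riemannZeta (1 - s)) =ᶠ[nhds s]
      fun s => 2 * mefG s * Complex.cos (π * s / 2) := by
    filter_upwards [(isOpen_lt continuous_const Complex.continuous_re).mem_nhds hs] with z hz
    exact mef_FE hz
  refine HasDerivAt.congr_of_eventuallyEq ?_ h1
  have h2 : HasDerivAt (fun s : ℂ => (π : ℂ) * s / 2) (π / 2) s := by
    simpa using ((hasDerivAt_id s).const_mul (π : ℂ)).div_const 2
  have h3 := ((mef_G_diff hs).hasDerivAt.const_mul 2).mul h2.ccos
  refine h3.congr_deriv ?_
  ring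

lemma mef_FE_deriv' {s : ℂ} (hs : 1 < s.re) :
    -deriv riemannZeta (1 - s) = 2 * deriv mefG s * Complex.cos (π * s / 2)
        - 2 * mefG s * (Complex.sin (π * s / 2) * (π / 2)) := by
  have hne : 1 - s ≠ 1 := by
    intro h
    have : s = 0 := by linear_combination -h
    rw [this] at hs
    simp at hs
    linarith
  have h1 : HasDerivAt riemannZeta (deriv riemannZeta (1 - s)) (1 - s) :=
    (differentiableAt_riemannZeta hne).hasDerivAt
  have h2 := h1.scomp s ((hasDerivAt_id s).const_sub 1)
  have h3 := h2.unique (mef_FE_deriv hs)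
  rw [← h3]
  simp

lemma mef_cos_sin {t : ℝ} :
    ‖Complex.cos (π * (3 / 2 - Complex.I * t) / 2)‖ = ‖Complex.sin (π * (3 / 2 - Complex.I * t) / 2)‖ := by
  set z : ℂ := π * (3 / 2 - Complex.I * t) / 2 with hz
  rw [← Complex.cos_pi_div_two_sub, ← norm_neg, ← Complex.cos_pi_sub, ← Complex.norm_conj,
    ← Complex.cos_conj, ← Complex.cos_neg]
  congr 2
  have e2 : (starRingEnd ℂ) 2 = 2 := Complex.conj_ofNat 2
  have e3 : (starRingEnd ℂ) 3 = 3 := Complex.conj_ofNat 3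
  simp [hz, e2, e3]
  ring

lemma mef_cos_ne {t : ℝ} : Complex.cos (π * (3 / 2 - Complex.I * t) / 2) ≠ 0 := by
  intro h
  have h1 := mef_cos_sin (t := t)
  rw [h, norm_zero] at h1
  have h2 := norm_eq_zero.1 h1.symm
  have h3 := Complex.sin_sq_add_cos_sq (π * (3 / 2 - Complex.I * t) / 2)
  rw [h, h2] at h3
  norm_num at h3

lemma mef_zeta_logDeriv_right : ∃ C : ℝ, ∀ s : ℂ, s.re = 3 / 2 → ‖logDeriv riemannZeta s‖ ≤ C := by
  refine ⟨∑' n, ‖LSeries.term (fun n => (ArithmeticFunction.vonMangoldt n : ℂ)) (3 / 2 : ℂ) n‖,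
    fun s hs => ?_⟩
  have h1 := ArithmeticFunction.LSeries_vonMangoldt_eq_deriv_riemannZeta_div (s := s) (by linarith)
  rw [neg_div, ← logDeriv_apply] at h1
  rw [← norm_neg, ← h1]
  have h2 := ArithmeticFunction.LSeriesSummable_vonMangoldt (s := s) (by linarith)
  refine (norm_tsum_le_tsum_norm h2.norm).trans (le_of_eq ?_)
  refine tsum_congr fun n => ?_
  rw [LSeries.norm_term_eq, LSeries.norm_term_eq, hs]
  norm_num

lemma mef_zeta_left : ∃ C : ℝ, ∀ t : ℝ, riemannZeta (-1 / 2 + Complex.I * t) ≠ 0 ∧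
    ‖logDeriv riemannZeta (-1 / 2 + Complex.I * t) + (Real.log (|t| + 2) : ℂ)‖ ≤ C := by
  obtain ⟨C, hC⟩ := mef_zeta_logDeriv_right
  refine ⟨Real.log (2 * π) + 3 / 2 + 4 + 2 + C, fun t => ?_⟩
  set s : ℂ := 3 / 2 - Complex.I * t with hs
  have hre : s.re = 3 / 2 := by simp [hs]
  have hs1 : (-1 / 2 + Complex.I * t : ℂ) = 1 - s := by rw [hs]; ring
  have h1 : 1 < s.re := by rw [hre]; norm_num
  have hG := mef_G_ne h1
  have hcos : Complex.cos (π * s / 2) ≠ 0 := mef_cos_ne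
  have hz : riemannZeta (1 - s) ≠ 0 := by
    rw [mef_FE h1]
    exact mul_ne_zero (mul_ne_zero two_ne_zero hG) hcos
  rw [hs1]
  refine ⟨hz, ?_⟩
  have hd : -logDeriv riemannZeta (1 - s) = logDeriv mefG s
      - Complex.sin (π * s / 2) / Complex.cos (π * s / 2) * (π / 2) := by
    rw [logDeriv_apply, logDeriv_apply, ← neg_div, mef_FE_deriv' h1, mef_FE h1]
    field_simp
  have hT : ‖Complex.sin (π * s / 2) / Complex.cos (π * s / 2) * (π / 2)‖ ≤ 2 := by
    rw [norm_mul, norm_div, hs, ← mef_cos_sin, div_self (norm_ne_zero_iff.2 mef_cos_ne), one_mul]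
    rw [norm_div, Complex.norm_real, Real.norm_of_nonneg Real.pi_pos.le]
    have := Real.pi_lt_four
    norm_num; linarith
  rw [mef_G_logDeriv h1] at hd
  have h3 := mef_digamma_bound hre
  have h4 := mef_log_bound t
  rw [← hs] at h4
  have h5 := hC s hre
  have e : logDeriv riemannZeta (1 - s) + (Real.log (|t| + 2) : ℂ)
      = (Real.log (2 * π) : ℂ) - (logDeriv Complex.Gamma s - Complex.log s)
        - (Complex.log s - (Real.log (|t| + 2) : ℂ))
        + Complex.sin (π * s / 2) / Complex.cos (π * s / 2) * (π / 2)
        - logDeriv riemannZeta s := by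
    linear_combination -hd
  rw [e]
  have h6 : ‖(Real.log (2 * π) : ℂ)‖ = Real.log (2 * π) := by
    rw [Complex.norm_real, Real.norm_of_nonneg]
    exact Real.log_nonneg (by linarith [Real.pi_gt_three])
  refine (norm_sub_le _ _).trans (add_le_add ?_ h5)
  refine (norm_add_le _ _).trans (add_le_add ?_ hT)
  refine (norm_sub_le _ _).trans (add_le_add ?_ h4)
  refine (norm_sub_le _ _).trans (add_le_add h6.le h3)

lemma mef_trivial_deriv (n : ℕ) : deriv riemannZeta (-2 * (n + 1)) ≠ 0 := by
  have hn : (0 : ℝ) ≤ n := Nat.cast_nonneg n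
  have h1 : 1 < (2 * n + 3 : ℂ).re := by
    simp; linarith
  have h2 := mef_FE_deriv' h1
  have hc : Complex.cos (π * (2 * n + 3 : ℂ) / 2) = 0 := by
    rw [Complex.cos_eq_zero_iff]
    exact ⟨n + 1, by push_cast; ring⟩
  have hsn : Complex.sin (π * (2 * n + 3 : ℂ) / 2) ≠ 0 := by
    intro h
    have h3 := Complex.sin_sq_add_cos_sq (π * (2 * n + 3 : ℂ) / 2)
    rw [h, hc] at h3
    norm_num at h3
  rw [hc, show (1 - (2 * n + 3 : ℂ)) = -2 * (n + 1) by ring] at h2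
  intro h
  rw [h] at h2
  have hp : (π : ℂ) ≠ 0 := by exact_mod_cast Real.pi_ne_zero
  have : 2 * mefG (2 * n + 3) * (Complex.sin (π * (2 * n + 3 : ℂ) / 2) * (π / 2)) ≠ 0 :=
    mul_ne_zero (mul_ne_zero two_ne_zero (mef_G_ne h1)) (mul_ne_zero hsn (by simp))
  apply this
  linear_combination h2

lemma mef_zeta1_eq {s : ℂ} (hs : s ≠ 1) : riemannZeta₁ s = (s - 1) * riemannZeta s := by
  rw [riemannZeta_eq_inv_sub_mul hs, mul_inv_cancel_left₀ (sub_ne_zero.2 hs)]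

lemma mef_zeta_one_ne : riemannZeta 1 ≠ 0 := riemannZeta_ne_zero_of_one_le_re (by simp)

lemma mef_zeta1_zero_iff (s : ℂ) : riemannZeta₁ s = 0 ↔ riemannZeta s = 0 := by
  by_cases hs : s = 1
  · subst hs
    simp [riemannZeta₁_one, mef_zeta_one_ne]
  · rw [mef_zeta1_eq hs, mul_eq_zero, sub_eq_zero]
    simp [hs]

lemma mef_zeta1_logDeriv {s : ℂ} (hs : s ≠ 1) (hz : riemannZeta s ≠ 0) :
    logDeriv riemannZeta₁ s = logDeriv riemannZeta s + 1 / (s - 1) := by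
  have h1 : riemannZeta₁ =ᶠ[nhds s] fun s => (s - 1) * riemannZeta s := by
    filter_upwards [isOpen_ne.mem_nhds hs] with z hz using mef_zeta1_eq hz
  have h2 : logDeriv riemannZeta₁ s = logDeriv (fun s => (s - 1) * riemannZeta s) s := by
    rw [logDeriv_apply, logDeriv_apply, h1.deriv_eq, h1.eq_of_nhds]
  rw [h2, logDeriv_mul (f := fun s => s - 1) (g := riemannZeta) s (sub_ne_zero.2 hs) hz
    (by fun_prop) (differentiableAt_riemannZeta hs), add_comm]
  congr 1
  simp [logDeriv_apply]

lemma mef_mult_eq {ρ : ℂ} (hρ : riemannZeta ρ = 0) :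
    analyticOrderNatAt riemannZeta₁ ρ = zetaMult ρ := by
  have h1 : ρ ≠ 1 := by rintro rfl; exact mef_zeta_one_ne hρ
  have ha : AnalyticAt ℂ riemannZeta ρ :=
    (DifferentiableOn.analyticAt (s := {1}ᶜ) (fun z hz =>
      (differentiableAt_riemannZeta hz).differentiableWithinAt)
      (isOpen_compl_singleton.mem_nhds h1))
  have h2 : riemannZeta₁ =ᶠ[nhds ρ] (fun s => s - 1) * riemannZeta := by
    filter_upwards [isOpen_ne.mem_nhds h1] with z hz using mef_zeta1_eq hz
  have hs : AnalyticAt ℂ (fun s : ℂ => s - 1) ρ := by fun_prop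
  have h3 : analyticOrderAt riemannZeta₁ ρ = analyticOrderAt riemannZeta ρ := by
    rw [analyticOrderAt_congr h2, analyticOrderAt_mul hs ha,
      hs.analyticOrderAt_eq_zero.2 (sub_ne_zero.2 h1), zero_add]
  have h4 : analyticOrderAt riemannZeta₁ ρ ≠ ⊤ :=
    mef_order_ne_top differentiable_riemannZeta₁ (z₀ := 1) (by simp [riemannZeta₁_one]) ρ
  have h5 := Nat.cast_analyticOrderNatAt h4
  have h6 := (analyticOrderAt_eq_nat_iff_iteratedDeriv_eq_zero ha).1 (h3.symm.trans h5.symm)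
  symm
  unfold zetaMult
  refine le_antisymm (Nat.sInf_le h6.2) ?_
  refine le_csInf ⟨_, h6.2⟩ fun n hn => ?_
  by_contra hlt
  exact hn (h6.1 n (not_le.1 hlt))

lemma mef_mult_trivial (n : ℕ) : zetaMult (-2 * (n + 1)) = 1 := by
  unfold zetaMult
  refine le_antisymm (Nat.sInf_le ?_) ?_
  · simp only [mem_setOf_eq, iteratedDeriv_one]
    exact mef_trivial_deriv n
  · refine le_csInf ⟨1, ?_⟩ fun k hk => ?_
    · simp only [mem_setOf_eq, iteratedDeriv_one]
      exact mef_trivial_deriv n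
    · by_contra hlt
      have : k = 0 := by omega
      subst this
      apply hk
      rw [iteratedDeriv_zero]
      exact riemannZeta_neg_two_mul_nat_add_one n

/-- all zeros of zeta -/
abbrev MefZ : Type := {ρ : ℂ // riemannZeta ρ = 0}

lemma mef_classify (hRH : RiemannHypothesis) (ρ : MefZ) :
    (∃ n : ℕ, (ρ : ℂ) = -2 * (n + 1)) ∨ (ρ : ℂ).re = 1 / 2 := by
  by_cases h : ∃ n : ℕ, (ρ : ℂ) = -2 * (n + 1)
  · exact Or.inl h
  · refine Or.inr (hRH ρ ρ.2 h ?_)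
    intro h1
    exact mef_zeta_one_ne (h1 ▸ ρ.2)

lemma mef_re_le (hRH : RiemannHypothesis) (ρ : MefZ) : (ρ : ℂ).re ≤ 1 / 2 := by
  rcases mef_classify hRH ρ with ⟨n, h⟩ | h
  · rw [h]; simp
    have := Nat.cast_nonneg (α := ℝ) n
    linarith
  · exact h.le

/-- the kernel -/
def mefK (t : ℝ) (p : ℂ) : ℂ := 2 / ((3 / 2 + Complex.I * t - p) * (p - (-1 / 2 + Complex.I * t)))

lemma mef_K_eq {t : ℝ} {p : ℂ} (h0 : 3 / 2 + Complex.I * t ≠ p) (h1 : p ≠ -1 / 2 + Complex.I * t) :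
    1 / (3 / 2 + Complex.I * t - p) - 1 / (-1 / 2 + Complex.I * t - p) = mefK t p := by
  unfold mefK
  have h0' := sub_ne_zero.2 h0
  have h1' := sub_ne_zero.2 h1
  have h1'' := sub_ne_zero.2 h1.symm
  rw [div_sub_div _ _ h0' h1'', div_eq_div_iff (mul_ne_zero h0' h1'') (mul_ne_zero h0' h1')]
  ring

lemma mef_K_crit {t : ℝ} {p : ℂ} (hp : p.re = 1 / 2) :
    mefK t p = ((2 / (1 + (t - p.im) ^ 2) : ℝ) : ℂ) := by
  have e : p = 1 / 2 + Complex.I * p.im := by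
    apply Complex.ext <;> simp [hp]
  unfold mefK
  have : (3 / 2 + Complex.I * t - p) * (p - (-1 / 2 + Complex.I * t))
      = ((1 + (t - p.im) ^ 2 : ℝ) : ℂ) := by
    generalize p.im = y at e
    rw [e]
    push_cast
    ring_nf
    rw [Complex.I_sq]; ring
  rw [this]
  push_cast
  rfl

lemma mef_K_trivial (t : ℝ) (n : ℕ) : ‖mefK t (-2 * (n + 1))‖ ≤
    4 * (1 / (n + 1 + |t|) - 1 / ((n + 1 : ℕ) + 1 + |t|)) := by
  set P : ℝ := (n + 1 + |t|) * (n + 2 + |t|) / 2 with hP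
  have hn : (0 : ℝ) ≤ n := Nat.cast_nonneg n
  have ht := abs_nonneg t
  have hPp : 0 < P := by positivity
  have key : ∀ z : ℂ, (n : ℝ) + 3 / 2 ≤ |z.re| → |z.im| = |t| → P ≤ ‖z‖ ^ 2 := by
    intro z h1 h2
    rw [← Complex.normSq_eq_norm_sq, Complex.normSq_apply, ← abs_mul_abs_self z.re,
      ← abs_mul_abs_self z.im, h2, hP]
    nlinarith [sq_nonneg (|z.re| - |t|)]
  have h1 := key (3 / 2 + Complex.I * t - (-2 * (n + 1))) (by
    simp
    rw [abs_of_nonneg (by linarith)]; linarith) (by simp)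
  have h2 := key (-2 * (n + 1) - (-1 / 2 + Complex.I * t)) (by
    simp
    rw [abs_of_nonpos (by linarith)]; linarith) (by simp)
  unfold mefK
  rw [norm_div, norm_mul]
  set a := ‖(3 / 2 + Complex.I * t - (-2 * (n + 1)))‖
  set b := ‖(-2 * (n + 1) - (-1 / 2 + Complex.I * t))‖
  have h3 : P ≤ a * b := by
    refine le_of_sq_le_sq ?_ (by positivity)
    rw [mul_pow, sq P]
    exact mul_le_mul h1 h2 hPp.le (by positivity)
  have e : 4 * (1 / (n + 1 + |t|) - 1 / ((n + 1 : ℕ) + 1 + |t|)) = 2 / P := by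
    rw [hP]; push_cast; field_simp; ring
  rw [e, Complex.norm_ofNat]
  gcongr

lemma mef_tel (t : ℝ) : HasSum (fun n : ℕ => 4 * (1 / ((n : ℝ) + 1 + |t|) - 1 / ((n + 1 : ℕ) + 1 + |t|)))
    (4 * (1 / (1 + |t|))) := by
  refine HasSum.mul_left 4 ?_
  rw [hasSum_iff_tendsto_nat_of_nonneg]
  · have h1 : ∀ n : ℕ, ∑ i ∈ Finset.range n, (1 / ((i : ℝ) + 1 + |t|) - 1 / ((i + 1 : ℕ) + 1 + |t|))
        = 1 / (1 + |t|) - 1 / ((n : ℝ) + 1 + |t|) := by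
      intro n
      rw [Finset.sum_range_sub' (fun i : ℕ => 1 / ((i : ℝ) + 1 + |t|))]
      simp
    simp_rw [h1]
    have h2 : Tendsto (fun n : ℕ => 1 / ((n : ℝ) + 1 + |t|)) atTop (nhds 0) := by
      simp_rw [one_div]
      refine tendsto_inv_atTop_zero.comp ?_
      exact tendsto_atTop_add_const_right _ _ (tendsto_atTop_add_const_right _ _
        tendsto_natCast_atTop_atTop)
    simpa using h2.const_sub (1 / (1 + |t|))
  · intro n
    rw [sub_nonneg]
    have := abs_nonneg t
    push_cast
    gcongr
    linarith

/-- trivial zeros as elements of the zero set -/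
def mefTriv (n : ℕ) : MefZ := ⟨-2 * (n + 1), riemannZeta_neg_two_mul_nat_add_one n⟩

lemma mef_Triv_inj : Function.Injective mefTriv := by
  intro a b h
  have := congrArg Subtype.val h
  simp only [mefTriv] at this
  have h2 : (a : ℂ) = b := by linear_combination (-1 / 2 : ℂ) * this
  exact_mod_cast h2

lemma mef_s1_ne (t : ℝ) : riemannZeta (-1 / 2 + Complex.I * t) ≠ 0 := by
  obtain ⟨C, hC⟩ := mef_zeta_left
  exact (hC t).1

lemma mef_zeros_fin (z : ℂ) (n : ℕ) : {ρ : MefZ | dist (ρ : ℂ) z ≤ n}.Finite := by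
  have h := (isCompact_closedBall z (n : ℝ)).inter_riemannZetaZeros_finite
  refine Finite.of_finite_image (f := Subtype.val) (h.subset ?_) Subtype.val_injective.injOn
  rintro _ ⟨ρ, hρ, rfl⟩
  exact ⟨hρ, ρ.2⟩

/-- zeros in a ball -/
def mefT (z : ℂ) (n : ℕ) : Finset MefZ := (mef_zeros_fin z n).toFinset

lemma mef_T_tendsto (z : ℂ) : Tendsto (mefT z) atTop atTop := by
  refine tendsto_atTop_finset_of_monotone ?_ ?_
  · intro a b hab ρ hρ
    simp only [mefT, Finite.mem_toFinset, mem_setOf_eq] at *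
    exact hρ.trans (by exact_mod_cast hab)
  · intro ρ
    obtain ⟨n, hn⟩ := exists_nat_ge (dist (ρ : ℂ) z)
    exact ⟨n, by simpa [mefT] using hn⟩

lemma mef_partial (t : ℝ) {s : ℂ} (hs : riemannZeta s ≠ 0) :
    Tendsto (fun n => ∑ ρ ∈ mefT (-1 / 2 + Complex.I * t) n,
      (zetaMult (ρ : ℂ) : ℂ) * (1 / (s - ρ) - 1 / (-1 / 2 + Complex.I * t - ρ))) atTop
      (nhds (logDeriv riemannZeta₁ s - logDeriv riemannZeta₁ (-1 / 2 + Complex.I * t))) := by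
  obtain ⟨A, hA⟩ := mef_zeta1_growth
  have h1 : riemannZeta₁ (-1 / 2 + Complex.I * t) ≠ 0 := by
    rw [Ne, mef_zeta1_zero_iff]; exact mef_s1_ne t
  have h2 : riemannZeta₁ s ≠ 0 := by rwa [Ne, mef_zeta1_zero_iff]
  have h3 := mef_hadamard_tendsto differentiable_riemannZeta₁ h1 hA
    (fun n => (mefT (-1 / 2 + Complex.I * t) n).map ⟨Subtype.val, Subtype.val_injective⟩) (by
      intro n ρ
      simp only [Finset.mem_map, Function.Embedding.coeFn_mk, mefT, Finite.mem_toFinset,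
        mem_setOf_eq, Subtype.exists, mef_zeta1_zero_iff]
      constructor
      · rintro ⟨a, ha, h, rfl⟩; exact ⟨ha, h⟩
      · rintro ⟨ha, h⟩; exact ⟨ρ, ha, h, rfl⟩) h2
  refine h3.congr fun n => ?_
  rw [Finset.sum_map]
  refine Finset.sum_congr rfl fun ρ _ => ?_
  rw [Function.Embedding.coeFn_mk, mef_mult_eq ρ.2]

lemma mef_summable (hRH : RiemannHypothesis) (t : ℝ) :
    Summable (fun ρ : MefZ => ‖(zetaMult (ρ : ℂ) : ℂ) * mefK t ρ‖) := by
  set g : MefZ → ℂ := fun ρ => (zetaMult (ρ : ℂ) : ℂ) * mefK t ρ with hg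
  classical
  set h : MefZ → ℝ := fun ρ => if (ρ : ℂ).re = 1 / 2 then 0 else ‖g ρ‖ with hh
  have hs : Summable h := by
    rw [← mef_Triv_inj.summable_iff]
    · refine Summable.of_nonneg_of_le (fun n => ?_) (fun n => ?_) (mef_tel t).summable
      · simp only [hh, Function.comp]; split_ifs <;> positivity
      · simp only [hh, Function.comp, hg, mefTriv]
        rw [if_neg, mef_mult_trivial]
        · simpa using mef_K_trivial t n
        · simp
          have := Nat.cast_nonneg (α := ℝ) n
          intro h; linarith
    · intro ρ hρ
      rcases mef_classify hRH ρ with ⟨n, h⟩ | h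
      · exact absurd ⟨n, Subtype.ext h.symm⟩ hρ
      · simp [hh, h]
  have hle : ∀ ρ, ‖g ρ‖ ≤ (g ρ).re + 2 * h ρ := by
    intro ρ
    by_cases hc : (ρ : ℂ).re = 1 / 2
    · have e : g ρ = ((zetaMult (ρ : ℂ) * (2 / (1 + (t - (ρ : ℂ).im) ^ 2)) : ℝ) : ℂ) := by
        simp only [hg]; rw [mef_K_crit hc]; push_cast; rfl
      rw [e, Complex.norm_real, Complex.ofReal_re, Real.norm_of_nonneg (by positivity)]
      simp [hh, hc]
    · simp only [hh, if_neg hc]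
      have := (abs_le.1 (Complex.abs_re_le_norm (g ρ))).1
      linarith
  have hz0 : riemannZeta (3 / 2 + Complex.I * t) ≠ 0 :=
    riemannZeta_ne_zero_of_one_lt_re (by simp; norm_num)
  have hb := (mef_partial t hz0).norm.bddAbove_range
  obtain ⟨B, hB⟩ := hb
  refine summable_of_sum_le (c := B + 2 * ∑' ρ, h ρ) (fun _ => norm_nonneg _) fun u => ?_
  obtain ⟨n, hn⟩ := ((mef_T_tendsto (-1 / 2 + Complex.I * t)).eventually
    (eventually_ge_atTop u)).exists
  have hBn := hB ⟨n, rfl⟩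
  have e : ∑ ρ ∈ mefT (-1 / 2 + Complex.I * t) n,
      (zetaMult (ρ : ℂ) : ℂ) * (1 / (3 / 2 + Complex.I * t - ρ) - 1 / (-1 / 2 + Complex.I * t - ρ))
      = ∑ ρ ∈ mefT (-1 / 2 + Complex.I * t) n, g ρ := by
    refine Finset.sum_congr rfl fun ρ _ => ?_
    rw [mef_K_eq]
    · intro h; exact hz0 (h ▸ ρ.2)
    · intro h; exact mef_s1_ne t (h ▸ ρ.2)
  simp only [e] at hBn
  calc ∑ ρ ∈ u, ‖g ρ‖ ≤ ∑ ρ ∈ mefT (-1 / 2 + Complex.I * t) n, ‖g ρ‖ :=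
        Finset.sum_le_sum_of_subset_of_nonneg hn fun _ _ _ => norm_nonneg _
    _ ≤ ∑ ρ ∈ mefT (-1 / 2 + Complex.I * t) n, ((g ρ).re + 2 * h ρ) :=
        Finset.sum_le_sum fun ρ _ => hle ρ
    _ = (∑ ρ ∈ mefT (-1 / 2 + Complex.I * t) n, g ρ).re
        + 2 * ∑ ρ ∈ mefT (-1 / 2 + Complex.I * t) n, h ρ := by
        rw [Finset.sum_add_distrib, Complex.re_sum, Finset.mul_sum]
    _ ≤ B + 2 * ∑' ρ, h ρ := by
        gcongr
        · exact (Complex.re_le_norm _).trans hBn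
        · refine hs.sum_le_tsum _ fun ρ _ => ?_
          simp only [hh]; split_ifs <;> positivity

lemma mef_hasSum (t : ℝ) {s : ℂ} (hs : riemannZeta s ≠ 0)
    (hsum : Summable fun ρ : MefZ =>
      (zetaMult (ρ : ℂ) : ℂ) * (1 / (s - ρ) - 1 / (-1 / 2 + Complex.I * t - ρ))) :
    HasSum (fun ρ : MefZ =>
      (zetaMult (ρ : ℂ) : ℂ) * (1 / (s - ρ) - 1 / (-1 / 2 + Complex.I * t - ρ)))
      (logDeriv riemannZeta₁ s - logDeriv riemannZeta₁ (-1 / 2 + Complex.I * t)) := by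
  have h1 := hsum.hasSum
  have h2 := h1.comp (mef_T_tendsto (-1 / 2 + Complex.I * t))
  have h3 := tendsto_nhds_unique h2 (mef_partial t hs)
  rwa [h3] at h1

instance : Countable MefZ := by
  have : (univ : Set MefZ) = ⋃ n : ℕ, (mefT 0 n : Set MefZ) := by
    symm
    rw [eq_univ_iff_forall]
    intro ρ
    obtain ⟨n, hn⟩ := exists_nat_ge (dist (ρ : ℂ) 0)
    exact mem_iUnion.2 ⟨n, by simpa [mefT] using hn⟩
  rw [← countable_univ_iff, this]
  exact countable_iUnion fun n => (mefT 0 n).countable_toSet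

lemma mef_integrable_tsum {ι : Type*} [Countable ι] {F : ι → ℝ → ℂ} (hF : ∀ i, Integrable (F i))
    (hs : Summable fun i => ∫ a, ‖F i a‖) (hc : Continuous fun a => ∑' i, F i a) :
    Integrable fun a => ∑' i, F i a := by
  refine ⟨hc.aestronglyMeasurable, ?_⟩
  rw [HasFiniteIntegral]
  calc ∫⁻ a, ‖∑' i, F i a‖ₑ ≤ ∫⁻ a, ∑' i, ‖F i a‖ₑ := lintegral_mono fun a => enorm_tsum_le_tsum_enorm
    _ = ∑' i, ∫⁻ a, ‖F i a‖ₑ := lintegral_tsum fun i => (hF i).1.enorm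
    _ = ∑' i, ENNReal.ofReal (∫ a, ‖F i a‖) := by
        refine tsum_congr fun i => ?_
        rw [ofReal_integral_norm_eq_lintegral_enorm (hF i)]
    _ = ENNReal.ofReal (∑' i, ∫ a, ‖F i a‖) :=
        (ENNReal.ofReal_tsum_of_nonneg (fun i => integral_nonneg fun a => norm_nonneg _) hs).symm
    _ < ⊤ := ENNReal.ofReal_lt_top

/-- `f` is integrable with Fourier transform `v` at `w` -/
def MefFT (f : ℝ → ℂ) (w : ℝ) (v : ℂ) : Prop :=
  Integrable f ∧ ∫ u : ℝ, Complex.exp (((-2 * π * u * w : ℝ) : ℂ) * Complex.I) * f u = v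

lemma mef_exp_norm (u w : ℝ) : ‖Complex.exp (((-2 * π * u * w : ℝ) : ℂ) * Complex.I)‖ = 1 :=
  Complex.norm_exp_ofReal_mul_I _

lemma mef_FT_int {f : ℝ → ℂ} (hf : Integrable f) (w : ℝ) :
    Integrable fun u : ℝ => Complex.exp (((-2 * π * u * w : ℝ) : ℂ) * Complex.I) * f u := by
  refine hf.bdd_mul (c := 1) (Continuous.aestronglyMeasurable (by fun_prop)) ?_
  exact Eventually.of_forall fun u => (mef_exp_norm u w).le

lemma mef_FT_add {f g : ℝ → ℂ} {w : ℝ} {a b : ℂ} (hf : MefFT f w a) (hg : MefFT g w b) :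
    MefFT (fun u => f u + g u) w (a + b) := by
  refine ⟨hf.1.add hg.1, ?_⟩
  simp_rw [mul_add]
  rw [integral_add (mef_FT_int hf.1 w) (mef_FT_int hg.1 w), hf.2, hg.2]

lemma mef_FT_mul {f : ℝ → ℂ} {w : ℝ} {a : ℂ} (c : ℂ) (hf : MefFT f w a) :
    MefFT (fun u => c * f u) w (c * a) := by
  refine ⟨hf.1.const_mul c, ?_⟩
  simp_rw [mul_left_comm _ c]
  rw [integral_const_mul, hf.2]

lemma mef_FT_shift {f : ℝ → ℂ} {w : ℝ} {a : ℂ} (b : ℝ) (hf : MefFT f w a) :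
    MefFT (fun u => f (u - b)) w
      (Complex.exp (((-2 * π * b * w : ℝ) : ℂ) * Complex.I) * a) := by
  refine ⟨hf.1.comp_sub_right b, ?_⟩
  have h := integral_sub_right_eq_self (μ := volume) (fun u : ℝ =>
    Complex.exp (((-2 * π * b * w : ℝ) : ℂ) * Complex.I) *
    (Complex.exp (((-2 * π * u * w : ℝ) : ℂ) * Complex.I) * f u)) b
  have h2 := integral_const_mul (μ := volume)
    (Complex.exp (((-2 * π * b * w : ℝ) : ℂ) * Complex.I)) (fun u : ℝ =>
    Complex.exp (((-2 * π * u * w : ℝ) : ℂ) * Complex.I) * f u)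
  rw [hf.2] at h2
  rw [← h2, ← h]
  congr 1
  ext u
  rw [← mul_assoc, ← Complex.exp_add]
  congr 2
  push_cast
  ring

lemma mef_FT_tsum {ι : Type*} [Countable ι] {F : ι → ℝ → ℂ} {w : ℝ} {V : ι → ℂ}
    (hF : ∀ i, MefFT (F i) w (V i))
    (hs : Summable fun i => ∫ a, ‖F i a‖) (hc : Continuous fun a => ∑' i, F i a) :
    Summable V ∧ MefFT (fun a => ∑' i, F i a) w (∑' i, V i) := by
  have h := hasSum_integral_of_summable_integral_norm
    (F := fun i (u : ℝ) => Complex.exp (((-2 * π * u * w : ℝ) : ℂ) * Complex.I) * F i u)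
    (fun i => mef_FT_int (hF i).1 w) (by
      simp_rw [norm_mul, mef_exp_norm, one_mul]; exact hs)
  have e : (fun i => ∫ u : ℝ, Complex.exp (((-2 * π * u * w : ℝ) : ℂ) * Complex.I) * F i u) = V :=
    funext fun i => (hF i).2
  rw [e] at h
  refine ⟨h.summable, mef_integrable_tsum (fun i => (hF i).1) hs hc, ?_⟩
  rw [h.tsum_eq]
  simp_rw [tsum_mul_left]

lemma mef_FT_zero {f : ℝ → ℂ} (hc : Continuous f) (hf : ∀ w, MefFT f w 0) : f = 0 := by
  have h1 : FourierTransform.fourier f = 0 := by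
    ext w
    rw [Real.fourier_real_eq_integral_exp_smul]
    simpa [smul_eq_mul] using (hf w).2
  have h2 := hc.fourierInv_fourier_eq (hf 0).1 (by rw [h1]; exact integrable_zero _ _ _)
  rw [← h2, h1]
  ext v
  rw [Real.fourierInv_eq']
  simp

/-- basic two-sided exponential -/
def mefH (t : ℝ) (p : ℂ) (u : ℝ) : ℂ :=
  if 0 ≤ u then Complex.exp ((p - 5 / 4) * u) else Complex.exp ((1 / 4 + Complex.I * t) * u)

lemma mef_H_cont (t : ℝ) (p : ℂ) : Continuous (mefH t p) := by
  unfold mefH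
  refine Continuous.if_le (by fun_prop) (by fun_prop) (by fun_prop) (by fun_prop) ?_
  intro u hu
  rw [← hu]; simp

lemma mef_H_norm (t : ℝ) {p : ℂ} (hp : p.re ≤ 1) (u : ℝ) : ‖mefH t p u‖ ≤ ‖mefH 0 1 u‖ := by
  unfold mefH
  split_ifs with h
  · rw [Complex.norm_exp, Complex.norm_exp]
    apply Real.exp_le_exp.2
    simp
    gcongr
  · rw [Complex.norm_exp, Complex.norm_exp]
    apply Real.exp_le_exp.2
    simp

lemma mef_H_norm_one (t : ℝ) {p : ℂ} (hp : p.re ≤ 1) (u : ℝ) : ‖mefH t p u‖ ≤ 1 := by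
  unfold mefH
  split_ifs with h
  · rw [Complex.norm_exp, Real.exp_le_one_iff]
    simp
    nlinarith
  · rw [Complex.norm_exp, Real.exp_le_one_iff]
    simp
    linarith

lemma mef_H_FT (t : ℝ) {p : ℂ} (hp : p.re ≤ 1) (w : ℝ) :
    MefFT (mefH t p) w (1 / ((5 / 4 + 2 * π * w * Complex.I) - p)
      + 1 / (3 / 2 + Complex.I * t - (5 / 4 + 2 * π * w * Complex.I))) := by
  have hI1 : IntegrableOn (mefH t p) (Iic 0) := by
    refine (integrableOn_exp_mul_complex_Iic (a := 1 / 4 + Complex.I * t) (by simp) 0).congr_fun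
      ?_ measurableSet_Iic
    intro u hu
    unfold mefH
    split_ifs with h
    · have : u = 0 := le_antisymm hu h
      simp [this]
    · rfl
  have hI2 : IntegrableOn (mefH t p) (Ioi 0) := by
    refine (integrableOn_exp_mul_complex_Ioi (a := p - 5 / 4) (by simp; linarith) 0).congr_fun
      ?_ measurableSet_Ioi
    intro u hu
    have : 0 ≤ u := le_of_lt hu
    simp [mefH, this]
  have hI : Integrable (mefH t p) := by
    rw [← integrableOn_univ, ← Iic_union_Ioi (a := (0 : ℝ))]
    exact hI1.union hI2
  refine ⟨hI, ?_⟩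
  have hJ := mef_FT_int hI w
  rw [← intervalIntegral.integral_Iic_add_Ioi (b := 0) hJ.integrableOn hJ.integrableOn]
  have e1 : ∫ u in Iic (0 : ℝ), Complex.exp (((-2 * π * u * w : ℝ) : ℂ) * Complex.I) * mefH t p u
      = ∫ u in Iic (0 : ℝ), Complex.exp ((1 / 4 + Complex.I * t - 2 * π * w * Complex.I) * u) := by
    refine setIntegral_congr_fun measurableSet_Iic fun u hu => ?_
    have : mefH t p u = Complex.exp ((1 / 4 + Complex.I * t) * u) := by
      unfold mefH
      split_ifs with h
      · have : u = 0 := le_antisymm hu h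
        simp [this]
      · rfl
    rw [this, ← Complex.exp_add]
    congr 1
    push_cast
    ring
  have e2 : ∫ u in Ioi (0 : ℝ), Complex.exp (((-2 * π * u * w : ℝ) : ℂ) * Complex.I) * mefH t p u
      = ∫ u in Ioi (0 : ℝ), Complex.exp ((p - 5 / 4 - 2 * π * w * Complex.I) * u) := by
    refine setIntegral_congr_fun measurableSet_Ioi fun u hu => ?_
    have h0 : 0 ≤ u := le_of_lt hu
    have : mefH t p u = Complex.exp ((p - 5 / 4) * u) := by simp [mefH, h0]
    rw [this, ← Complex.exp_add]
    congr 1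
    push_cast
    ring
  have r1 : (1 / 4 + Complex.I * t - 2 * π * w * Complex.I).re = 1 / 4 := by simp
  have r2 : (p - 5 / 4 - 2 * π * w * Complex.I).re = p.re - 5 / 4 := by simp
  rw [e1, e2, integral_exp_mul_complex_Iic (by rw [r1]; norm_num),
    integral_exp_mul_complex_Ioi (by rw [r2]; linarith)]
  simp only [ofReal_zero, mul_zero, Complex.exp_zero]
  rw [add_comm]
  congr 1
  · rw [neg_div, ← div_neg]
    congr 1
    ring
  · congr 1
    ring

/-- the coefficient of the prime sum -/
def mefL (n : ℕ) : ℂ := ((ArithmeticFunction.vonMangoldt n * (n : ℝ) ^ (-(5 / 4) : ℝ) : ℝ) : ℂ)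

lemma mef_L_term (n : ℕ) (w : ℝ) :
    mefL n * Complex.exp (((-2 * π * Real.log n * w : ℝ) : ℂ) * Complex.I) =
    LSeries.term (fun n => (ArithmeticFunction.vonMangoldt n : ℂ)) (5 / 4 + 2 * π * w * Complex.I) n := by
  rcases Nat.eq_zero_or_pos n with rfl | hn
  · simp [mefL]
  · have hn0 : (n : ℂ) ≠ 0 := by exact_mod_cast hn.ne'
    have hn1 : (0 : ℝ) < n := by exact_mod_cast hn
    rw [LSeries.term_of_ne_zero hn.ne', mefL, div_eq_mul_inv _ ((n : ℂ) ^ _), ← Complex.cpow_neg,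
      Complex.cpow_def_of_ne_zero hn0, Real.rpow_def_of_pos hn1]
    push_cast
    rw [mul_assoc, ← Complex.exp_add]
    congr 2
    ring

lemma mef_L_norm (n : ℕ) : ‖mefL n‖ =
    ‖LSeries.term (fun n => (ArithmeticFunction.vonMangoldt n : ℂ)) (5 / 4 : ℂ) n‖ := by
  have := mef_L_term n 0
  simp at this
  rw [this]

lemma mef_L_summable : Summable fun n => ‖mefL n‖ := by
  simp_rw [mef_L_norm]
  exact (ArithmeticFunction.LSeriesSummable_vonMangoldt (s := (5 / 4 : ℂ)) (by norm_num)).norm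

lemma mef_s1_re (t : ℝ) : (-1 / 2 + Complex.I * t : ℂ).re ≤ 1 := by
  simp; norm_num

/-- integral of the dominating function -/
def mefB : ℝ := ∫ u, ‖mefH 0 1 u‖

lemma mef_B_int : Integrable fun u => ‖mefH 0 1 u‖ := (mef_H_FT 0 (p := 1) (by simp) 0).1.norm

lemma mef_H_int_norm (t : ℝ) {p : ℂ} (hp : p.re ≤ 1) : ∫ u, ‖mefH t p u‖ ≤ mefB :=
  integral_mono (mef_H_FT t hp 0).1.norm mef_B_int (mef_H_norm t hp)

/-- prime part -/
def mefP (t : ℝ) (u : ℝ) : ℂ := ∑' n : ℕ, mefL n * mefH t (-1 / 2 + Complex.I * t) (u - Real.log n)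

/-- zeros part -/
def mefQ (t : ℝ) (u : ℝ) : ℂ := ∑' ρ : MefZ, ((zetaMult (ρ : ℂ) : ℂ) * mefK t ρ) * mefH t ρ u

lemma mef_P_cont (t : ℝ) : Continuous (mefP t) := by
  refine continuous_tsum (u := fun n => ‖mefL n‖) ?_ mef_L_summable ?_
  · intro n
    exact continuous_const.mul ((mef_H_cont t _).comp (by fun_prop))
  · intro n u
    rw [norm_mul]
    exact mul_le_of_le_one_right (norm_nonneg _) (mef_H_norm_one t (mef_s1_re t) _)

lemma mef_P_FT (t w : ℝ) : MefFT (mefP t) w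
    (-logDeriv riemannZeta (5 / 4 + 2 * π * w * Complex.I) *
      (1 / ((5 / 4 + 2 * π * w * Complex.I) - (-1 / 2 + Complex.I * t))
      + 1 / (3 / 2 + Complex.I * t - (5 / 4 + 2 * π * w * Complex.I)))) := by
  have h0 := mef_H_FT t (mef_s1_re t) w
  have h := mef_FT_tsum (w := w) (fun n : ℕ => mef_FT_mul (mefL n) (mef_FT_shift (Real.log n) h0)) (by
    refine Summable.of_nonneg_of_le (fun n => integral_nonneg fun u => norm_nonneg _) (fun n => ?_)
      (mef_L_summable.mul_right mefB)
    simp_rw [norm_mul]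
    rw [integral_const_mul]
    gcongr
    rw [integral_sub_right_eq_self (fun u => ‖mefH t (-1 / 2 + Complex.I * t) u‖)]
    exact mef_H_int_norm t (mef_s1_re t)) (mef_P_cont t)
  have h2 := h.2
  simp_rw [← mul_assoc, mef_L_term] at h2
  rw [tsum_mul_right] at h2
  have h3 := ArithmeticFunction.LSeries_vonMangoldt_eq_deriv_riemannZeta_div
    (s := 5 / 4 + 2 * π * w * Complex.I) (by simp; norm_num)
  rw [LSeries, neg_div, ← logDeriv_apply] at h3
  rw [h3] at h2
  exact h2

lemma mef_Q_cont (hRH : RiemannHypothesis) (t : ℝ) : Continuous (mefQ t) := by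
  refine continuous_tsum (u := fun ρ : MefZ => ‖(zetaMult (ρ : ℂ) : ℂ) * mefK t ρ‖) ?_
    (mef_summable hRH t) ?_
  · intro ρ
    exact continuous_const.mul (mef_H_cont t _)
  · intro ρ u
    rw [norm_mul]
    exact mul_le_of_le_one_right (norm_nonneg _)
      (mef_H_norm_one t ((mef_re_le hRH ρ).trans (by norm_num)) _)

lemma mef_alg {a b p s : ℂ} (h1 : s - p ≠ 0) (h2 : a - s ≠ 0) (h3 : a - p ≠ 0) (h4 : p - b ≠ 0)
    (h5 : s - b ≠ 0) (hab : a - b = 2) :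
    2 / ((a - p) * (p - b)) * (1 / (s - p) + 1 / (a - s))
      = (1 / (s - b) + 1 / (a - s)) * (1 / (s - p) - 1 / (b - p)) := by
  have h4' : b - p ≠ 0 := by rw [← neg_sub]; exact neg_ne_zero.2 h4
  rw [div_add_div _ _ h1 h2, div_add_div _ _ h5 h2, div_sub_div _ _ h1 h4', div_mul_div_comm,
    div_mul_div_comm, div_eq_div_iff (by positivity) (by positivity), ← hab]
  ring

lemma mef_ne_of_re {a b : ℂ} (h : a.re ≠ b.re) : a - b ≠ 0 := by
  intro h1
  exact h (congrArg Complex.re (sub_eq_zero.1 h1))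

lemma mef_K_FT (t : ℝ) {p : ℂ} (hp : p.re ≤ 1) (hps : p ≠ -1 / 2 + Complex.I * t) (w : ℝ) :
    mefK t p * (1 / ((5 / 4 + 2 * π * w * Complex.I) - p)
      + 1 / (3 / 2 + Complex.I * t - (5 / 4 + 2 * π * w * Complex.I))) =
    (1 / ((5 / 4 + 2 * π * w * Complex.I) - (-1 / 2 + Complex.I * t))
      + 1 / (3 / 2 + Complex.I * t - (5 / 4 + 2 * π * w * Complex.I))) *
    (1 / ((5 / 4 + 2 * π * w * Complex.I) - p) - 1 / (-1 / 2 + Complex.I * t - p)) := by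
  unfold mefK
  refine mef_alg ?_ ?_ ?_ (sub_ne_zero.2 hps) ?_ (by ring)
  · apply mef_ne_of_re; simp; intro h; linarith
  · apply mef_ne_of_re; simp; norm_num
  · apply mef_ne_of_re; simp; intro h; linarith
  · apply mef_ne_of_re; simp; norm_num

lemma mef_C_ne (t w : ℝ) : (1 / ((5 / 4 + 2 * π * w * Complex.I) - (-1 / 2 + Complex.I * t))
      + 1 / (3 / 2 + Complex.I * t - (5 / 4 + 2 * π * w * Complex.I))) ≠ 0 := by
  have h1 : (5 / 4 + 2 * π * w * Complex.I) - (-1 / 2 + Complex.I * t) ≠ 0 := by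
    apply mef_ne_of_re; simp; norm_num
  have h2 : 3 / 2 + Complex.I * t - (5 / 4 + 2 * π * w * Complex.I) ≠ 0 := by
    apply mef_ne_of_re; simp; norm_num
  rw [div_add_div _ _ h1 h2]
  refine div_ne_zero ?_ (mul_ne_zero h1 h2)
  ring_nf
  norm_num

lemma mef_Q_FT (hRH : RiemannHypothesis) (t w : ℝ) : MefFT (mefQ t) w
    ((1 / ((5 / 4 + 2 * π * w * Complex.I) - (-1 / 2 + Complex.I * t))
      + 1 / (3 / 2 + Complex.I * t - (5 / 4 + 2 * π * w * Complex.I))) *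
      (logDeriv riemannZeta₁ (5 / 4 + 2 * π * w * Complex.I)
        - logDeriv riemannZeta₁ (-1 / 2 + Complex.I * t))) := by
  have hre : ∀ ρ : MefZ, (ρ : ℂ).re ≤ 1 := fun ρ => (mef_re_le hRH ρ).trans (by norm_num)
  have h := mef_FT_tsum (w := w) (fun ρ : MefZ =>
    mef_FT_mul ((zetaMult (ρ : ℂ) : ℂ) * mefK t ρ) (mef_H_FT t (hre ρ) w)) (by
    refine Summable.of_nonneg_of_le (fun n => integral_nonneg fun u => norm_nonneg _) (fun ρ => ?_)
      ((mef_summable hRH t).mul_right mefB)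
    simp_rw [norm_mul (_ * _) (mefH _ _ _)]
    rw [integral_const_mul]
    gcongr
    exact mef_H_int_norm t (hre ρ)) (mef_Q_cont hRH t)
  have e : ∀ ρ : MefZ, (zetaMult (ρ : ℂ) : ℂ) * mefK t ρ *
      (1 / ((5 / 4 + 2 * π * w * Complex.I) - ρ)
      + 1 / (3 / 2 + Complex.I * t - (5 / 4 + 2 * π * w * Complex.I))) =
      (1 / ((5 / 4 + 2 * π * w * Complex.I) - (-1 / 2 + Complex.I * t))
      + 1 / (3 / 2 + Complex.I * t - (5 / 4 + 2 * π * w * Complex.I))) *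
      ((zetaMult (ρ : ℂ) : ℂ) * (1 / ((5 / 4 + 2 * π * w * Complex.I) - ρ)
        - 1 / (-1 / 2 + Complex.I * t - ρ))) := by
    intro ρ
    rw [mul_assoc, mef_K_FT t (hre ρ) (by intro h; exact mef_s1_ne t (h ▸ ρ.2)) w]
    ring
  simp_rw [e] at h
  have hsum := (summable_mul_left_iff (mef_C_ne t w)).1 h.1
  have hs : riemannZeta (5 / 4 + 2 * π * w * Complex.I) ≠ 0 :=
    riemannZeta_ne_zero_of_one_lt_re (by simp; norm_num)
  have h3 := (mef_hasSum t hs hsum).tsum_eq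
  have h2 := h.2
  rw [tsum_mul_left, h3] at h2
  exact h2

lemma mef_identity (hRH : RiemannHypothesis) (t u : ℝ) :
    mefP t u + logDeriv riemannZeta (-1 / 2 + Complex.I * t) * mefH t (-1 / 2 + Complex.I * t) u
      + (-mefK t 1) * mefH t 1 u + mefQ t u = 0 := by
  have h := mef_FT_zero (f := fun u => mefP t u
      + logDeriv riemannZeta (-1 / 2 + Complex.I * t) * mefH t (-1 / 2 + Complex.I * t) u
      + (-mefK t 1) * mefH t 1 u + mefQ t u) ?_ ?_
  · exact congrFun h u
  · exact (((mef_P_cont t).add (continuous_const.mul (mef_H_cont t _))).add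
      (continuous_const.mul (mef_H_cont t _))).add (mef_Q_cont hRH t)
  · intro w
    have h1 := mef_FT_add (mef_FT_add (mef_FT_add (mef_P_FT t w)
      (mef_FT_mul (logDeriv riemannZeta (-1 / 2 + Complex.I * t)) (mef_H_FT t (mef_s1_re t) w)))
      (mef_FT_mul (-mefK t 1) (mef_H_FT t (p := 1) (by simp) w))) (mef_Q_FT hRH t w)
    convert h1 using 1
    have hs1 : (1 : ℂ) ≠ -1 / 2 + Complex.I * t := by
      apply sub_ne_zero.1; apply mef_ne_of_re; simp; norm_num
    have hs : (5 / 4 + 2 * π * w * Complex.I : ℂ) ≠ 1 := by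
      apply sub_ne_zero.1; apply mef_ne_of_re; simp; norm_num
    rw [neg_mul (mefK t 1), mef_K_FT t (by simp) hs1 w, mef_zeta1_logDeriv hs
      (riemannZeta_ne_zero_of_one_lt_re (by simp; norm_num)),
      mef_zeta1_logDeriv hs1.symm (mef_s1_ne t)]
    ring

lemma mef_split (hRH : RiemannHypothesis) {g : MefZ → ℂ} (hg : Summable g) :
    ∑' ρ, g ρ = (∑' ρ : {ρ : ℂ // ZetaNontrivZero ρ}, g ⟨ρ, ρ.2.1⟩) + ∑' n, g (mefTriv n) := by
  set j : {ρ : ℂ // ZetaNontrivZero ρ} → MefZ := fun ρ => ⟨ρ, ρ.2.1⟩ with hj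
  have hji : Function.Injective j := fun a b h => Subtype.ext (congrArg (fun z : MefZ => (z : ℂ)) h)
  have hc : IsCompl (range j) (range mefTriv) := by
    rw [isCompl_iff, disjoint_iff_inter_eq_empty, codisjoint_iff_le_sup]
    constructor
    · ext ρ
      simp only [mem_inter_iff, mem_range, mem_empty_iff_false, iff_false, not_and]
      rintro ⟨a, rfl⟩ ⟨n, hn⟩
      have h1 := congrArg (fun z : MefZ => (z : ℂ).re) hn
      simp [mefTriv, hj] at h1
      have h2 := a.2.2.1
      have := Nat.cast_nonneg (α := ℝ) n
      linarith
    · intro ρ _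
      rcases mef_classify hRH ρ with ⟨n, h⟩ | h
      · exact Or.inr ⟨n, Subtype.ext h.symm⟩
      · exact Or.inl ⟨⟨ρ, ρ.2, by rw [h]; norm_num, by rw [h]; norm_num⟩, rfl⟩
  have h1 := (hji.hasSum_range_iff (f := g)).2 (hg.comp_injective hji).hasSum
  have h2 := (mef_Triv_inj.hasSum_range_iff (f := g)).2 (hg.comp_injective mef_Triv_inj).hasSum
  exact (HasSum.add_isCompl hc h1 h2).tsum_eq

lemma mef_cpow {x : ℝ} (hx : 0 < x) (z : ℂ) : (x : ℂ) ^ z = Complex.exp (z * Real.log x) := by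
  rw [Complex.cpow_def_of_ne_zero (by exact_mod_cast hx.ne'), Complex.ofReal_log hx.le, mul_comm]

lemma mef_prime_term {x : ℝ} (hx : 0 < x) (t : ℝ) (n : ℕ) :
    Complex.exp ((5 / 4 - Complex.I * t) * Real.log x) *
      (mefL n * mefH t (-1 / 2 + Complex.I * t) (Real.log x - Real.log n)) =
    ((ArithmeticFunction.vonMangoldt n * aWeight n x : ℝ) : ℂ) * (n : ℂ) ^ (-(Complex.I * (t : ℂ))) := by
  rcases Nat.eq_zero_or_pos n with rfl | hn
  · simp [mefL]
  have hn1 : (0 : ℝ) < n := by exact_mod_cast hn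
  have e1 : ((n : ℝ) / x) ^ ((1 : ℝ) / 2) = Real.exp (-(1 / 2) * (Real.log x - Real.log n)) := by
    rw [Real.rpow_def_of_pos (by positivity), Real.log_div hn1.ne' hx.ne']; congr 1; ring
  have e2 : (x / (n : ℝ)) ^ ((3 : ℝ) / 2) = Real.exp (3 / 2 * (Real.log x - Real.log n)) := by
    rw [Real.rpow_def_of_pos (by positivity), Real.log_div hx.ne' hn1.ne']; congr 1; ring
  have e3 : (n : ℂ) ^ (-(Complex.I * (t : ℂ))) = Complex.exp (-(Complex.I * t) * Real.log n) := by
    have := mef_cpow hn1 (-(Complex.I * (t : ℂ)))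
    simpa using this
  have e4 : (n : ℝ) ^ (-(5 / 4) : ℝ) = Real.exp (-(5 / 4) * Real.log n) := by
    rw [Real.rpow_def_of_pos hn1]; congr 1; ring
  rw [mefL, e3, e4, aWeight, e1, e2]
  unfold mefH
  split_ifs with h
  · rw [min_eq_left (Real.exp_le_exp.2 (by nlinarith))]
    push_cast
    rw [mul_left_comm, mul_assoc, mul_assoc, mul_left_comm, ← Complex.exp_add, mul_left_comm,
      ← Complex.exp_add, ← Complex.exp_add]
    congr 2
    ring
  · rw [min_eq_right (Real.exp_le_exp.2 (by nlinarith))]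
    push_cast
    rw [mul_left_comm, mul_assoc, mul_assoc, mul_left_comm, ← Complex.exp_add, mul_left_comm,
      ← Complex.exp_add, ← Complex.exp_add]
    congr 2
    ring

lemma mef_H_pos {x : ℝ} (hx : 1 ≤ x) (t : ℝ) (p : ℂ) :
    Complex.exp ((5 / 4 - Complex.I * t) * Real.log x) * mefH t p (Real.log x)
      = Complex.exp ((p - Complex.I * t) * Real.log x) := by
  rw [mefH, if_pos (Real.log_nonneg hx), ← Complex.exp_add]
  congr 1
  ring

lemma mef_trivial_sum {x : ℝ} (hx : 1 ≤ x) (t : ℝ) :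
    ‖∑' n : ℕ, mefK t (-2 * (n + 1)) *
      Complex.exp ((-2 * (n + 1) - Complex.I * t) * Real.log x)‖
      ≤ 8 * (x ^ (-(2 : ℝ)) / (|t| + 2)) := by
  have h0 : 0 < x := by linarith
  have h1 := (mef_tel t).mul_right (x ^ (-(2 : ℝ)))
  have h2 := tsum_of_norm_bounded h1 (f := fun n : ℕ => mefK t (-2 * (n + 1)) *
      Complex.exp ((-2 * (n + 1) - Complex.I * t) * Real.log x)) (by
    intro n
    rw [norm_mul]
    refine mul_le_mul (mef_K_trivial t n) ?_ (norm_nonneg _) ((norm_nonneg _).trans (mef_K_trivial t n))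
    rw [Complex.norm_exp, Real.rpow_def_of_pos h0]
    apply Real.exp_le_exp.2
    simp
    have hl := Real.log_nonneg hx
    have := Nat.cast_nonneg (α := ℝ) n
    nlinarith [mul_nonneg this hl])
  refine h2.trans ?_
  have ht := abs_nonneg t
  have hx2 : 0 ≤ x ^ (-(2 : ℝ)) := by positivity
  have : 4 * (1 / (1 + |t|)) ≤ 8 / (|t| + 2) := by
    rw [mul_one_div, div_le_div_iff₀ (by positivity) (by positivity)]
    linarith
  calc 4 * (1 / (1 + |t|)) * x ^ (-(2 : ℝ)) ≤ 8 / (|t| + 2) * x ^ (-(2 : ℝ)) := by gcongr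
    _ = _ := by ring

/-- Montgomery's explicit formula: assuming RH, for `x ≥ 1` and `t` real,
`2 x^{1/2-it} ∑_γ x^{iγ}/(1+(t-γ)²) = -∑_n Λ(n) a_n(x) n^{-it}
  + 2x^{1-it}/((1/2+it)(3/2-it)) + x^{-1/2}(log(|t|+2)+O(1)) + O(x^{-2}/(|t|+2))`,
the sum over the ordinates of the non-trivial zeros counted with multiplicity. -/
theorem montgomery_explicit_formula (hRH : RiemannHypothesis) :
    ∃ C : ℝ, 0 < C ∧ ∀ x : ℝ, 1 ≤ x → ∀ t : ℝ,
      ‖2 * (x : ℂ) ^ ((1 / 2 : ℂ) - Complex.I * (t : ℂ)) *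
          (∑' ρ : {ρ : ℂ // ZetaNontrivZero ρ},
            (zetaMult (ρ : ℂ) : ℂ) *
              Complex.exp (Complex.I * (((ρ : ℂ).im : ℝ) : ℂ) * (Real.log x : ℂ)) /
              (((1 + (t - (ρ : ℂ).im) ^ 2 : ℝ)) : ℂ))
        + (∑' n : ℕ, ((ArithmeticFunction.vonMangoldt n * aWeight n x : ℝ) : ℂ) *
            (n : ℂ) ^ (-(Complex.I * (t : ℂ))))
        - 2 * (x : ℂ) ^ ((1 : ℂ) - Complex.I * (t : ℂ)) /
            ((1 / 2 + Complex.I * (t : ℂ)) * (3 / 2 - Complex.I * (t : ℂ)))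
        - ((x ^ (-(1 / 2) : ℝ) * Real.log (|t| + 2) : ℝ) : ℂ)‖
      ≤ C * (x ^ (-(1 / 2) : ℝ) + x ^ (-(2 : ℝ)) / (|t| + 2)) := by
  obtain ⟨C, hC⟩ := mef_zeta_left
  refine ⟨max C 8, lt_of_lt_of_le (by norm_num) (le_max_right _ _), fun x hx t => ?_⟩
  have h0 : 0 < x := by linarith
  set E : ℂ := Complex.exp ((5 / 4 - Complex.I * t) * Real.log x) with hE
  have hid := congrArg (fun z => E * z) (mef_identity hRH t (Real.log x))
  simp only [mul_zero, mul_add] at hid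
  -- the prime part
  have hP : E * mefP t (Real.log x) =
      ∑' n : ℕ, ((ArithmeticFunction.vonMangoldt n * aWeight n x : ℝ) : ℂ) *
            (n : ℂ) ^ (-(Complex.I * (t : ℂ))) := by
    rw [mefP, ← tsum_mul_left]
    exact tsum_congr fun n => mef_prime_term h0 t n
  -- the constant part
  have hx12 : ((x ^ (-(1 / 2) : ℝ) : ℝ) : ℂ) = Complex.exp ((-1 / 2 : ℂ) * Real.log x) := by
    rw [Complex.ofReal_cpow h0.le, mef_cpow h0]
    push_cast
    congr 1
    ring
  have hL : E * (logDeriv riemannZeta (-1 / 2 + Complex.I * t) *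
      mefH t (-1 / 2 + Complex.I * t) (Real.log x)) =
      logDeriv riemannZeta (-1 / 2 + Complex.I * t) * ((x ^ (-(1 / 2) : ℝ) : ℝ) : ℂ) := by
    rw [mul_left_comm, mef_H_pos hx, hx12]
    congr 2
    ring
  have h1 : E * (-mefK t 1 * mefH t 1 (Real.log x)) =
      -(2 * (x : ℂ) ^ ((1 : ℂ) - Complex.I * (t : ℂ)) /
            ((1 / 2 + Complex.I * (t : ℂ)) * (3 / 2 - Complex.I * (t : ℂ)))) := by
    rw [mul_left_comm, mef_H_pos hx, ← mef_cpow h0, mefK,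
      show (3 / 2 + Complex.I * t - 1 : ℂ) = 1 / 2 + Complex.I * t by ring,
      show (1 - (-1 / 2 + Complex.I * t) : ℂ) = 3 / 2 - Complex.I * t by ring]
    ring
  -- the zeros part
  have hQ : E * mefQ t (Real.log x) =
      2 * (x : ℂ) ^ ((1 / 2 : ℂ) - Complex.I * (t : ℂ)) *
          (∑' ρ : {ρ : ℂ // ZetaNontrivZero ρ},
            (zetaMult (ρ : ℂ) : ℂ) *
              Complex.exp (Complex.I * (((ρ : ℂ).im : ℝ) : ℂ) * (Real.log x : ℂ)) /
              (((1 + (t - (ρ : ℂ).im) ^ 2 : ℝ)) : ℂ))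
      + ∑' n : ℕ, mefK t (-2 * (n + 1)) *
        Complex.exp ((-2 * (n + 1) - Complex.I * t) * Real.log x) := by
    have hsum : Summable fun ρ : MefZ =>
        ((zetaMult (ρ : ℂ) : ℂ) * mefK t ρ) * mefH t ρ (Real.log x) := by
      refine Summable.of_norm_bounded (mef_summable hRH t) fun ρ => ?_
      rw [norm_mul]
      exact mul_le_of_le_one_right (norm_nonneg _)
        (mef_H_norm_one t ((mef_re_le hRH ρ).trans (by norm_num)) _)
    rw [mefQ, mef_split hRH hsum, mul_add, ← tsum_mul_left, ← tsum_mul_left, ← tsum_mul_left]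
    congr 1
    · refine tsum_congr fun ρ => ?_
      have hre : (ρ : ℂ).re = 1 / 2 := by
        rcases mef_classify hRH ⟨ρ, ρ.2.1⟩ with ⟨n, h⟩ | h
        · have h2 := ρ.2.2.1
          simp only at h
          rw [h] at h2
          simp at h2
          have := Nat.cast_nonneg (α := ℝ) n
          linarith
        · exact h
      have e : (ρ : ℂ) = 1 / 2 + Complex.I * (ρ : ℂ).im := by
        apply Complex.ext <;> simp [hre]
      rw [mul_left_comm, mef_H_pos hx, mef_K_crit hre, mef_cpow h0]
      have e2 : Complex.exp (((ρ : ℂ) - Complex.I * t) * Real.log x) =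
          Complex.exp ((1 / 2 - Complex.I * t) * Real.log x) *
          Complex.exp (Complex.I * (((ρ : ℂ).im : ℝ) : ℂ) * (Real.log x : ℂ)) := by
        rw [← Complex.exp_add]
        congr 1
        linear_combination (Real.log x : ℂ) * e
      rw [e2]
      push_cast
      ring
    · refine tsum_congr fun n => ?_
      simp only [mefTriv]
      rw [mul_left_comm, mef_H_pos hx, mef_mult_trivial]
      simp
  rw [hP, hL, h1, hQ] at hid
  set A := 2 * (x : ℂ) ^ ((1 / 2 : ℂ) - Complex.I * (t : ℂ)) *
          (∑' ρ : {ρ : ℂ // ZetaNontrivZero ρ},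
            (zetaMult (ρ : ℂ) : ℂ) *
              Complex.exp (Complex.I * (((ρ : ℂ).im : ℝ) : ℂ) * (Real.log x : ℂ)) /
              (((1 + (t - (ρ : ℂ).im) ^ 2 : ℝ)) : ℂ))
  set S := ∑' n : ℕ, ((ArithmeticFunction.vonMangoldt n * aWeight n x : ℝ) : ℂ) *
            (n : ℂ) ^ (-(Complex.I * (t : ℂ)))
  set T := ∑' n : ℕ, mefK t (-2 * (n + 1)) *
        Complex.exp ((-2 * (n + 1) - Complex.I * t) * Real.log x)
  have hT : ‖T‖ ≤ 8 * (x ^ (-(2 : ℝ)) / (|t| + 2)) := mef_trivial_sum hx t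
  set D := 2 * (x : ℂ) ^ ((1 : ℂ) - Complex.I * (t : ℂ)) /
            ((1 / 2 + Complex.I * (t : ℂ)) * (3 / 2 - Complex.I * (t : ℂ)))
  have hfin : A + S - D - ((x ^ (-(1 / 2) : ℝ) * Real.log (|t| + 2) : ℝ) : ℂ)
      = -((logDeriv riemannZeta (-1 / 2 + Complex.I * t) + (Real.log (|t| + 2) : ℂ))
        * ((x ^ (-(1 / 2) : ℝ) : ℝ) : ℂ)) - T := by
    rw [Complex.ofReal_mul]
    linear_combination hid
  rw [hfin]
  have hxp : 0 < x ^ (-(1 / 2) : ℝ) := by positivity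
  have hx2 : 0 ≤ x ^ (-(2 : ℝ)) / (|t| + 2) := by positivity
  refine (norm_sub_le _ _).trans ?_
  rw [norm_neg, norm_mul, Complex.norm_real, Real.norm_of_nonneg hxp.le, mul_add]
  refine add_le_add ?_ (hT.trans ?_)
  · exact mul_le_mul_of_nonneg_right ((hC t).2.trans (le_max_left _ _)) hxp.le
  · exact mul_le_mul_of_nonneg_right (le_max_right _ _) hx2
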